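/- arXiv:1212.1377 — 5 statements merged into one kernel-verified Lean document; each statement's English description precedes it below -/
import Mathlib

section
/- Let P be a real-valued square-integrable random variable and let P_ℓ (ℓ = 0,1,2,…) be a sequence of approximations to P. Suppose there exist positive constants α, β, γ, c₁, c₂, c₃ with α ≥ (1/2)·min(β,γ) such that: (i) |E[P_ℓ − P]| ≤ c₁·2^{−αℓ} for all ℓ; and for every level ℓ and every number of samples N_ℓ ∈ ℕ₊ there is an estimator Y_ℓ (the estimators at different levels being independent) satisfying (ii) E[Y₀] = E[P₀] and E[Y_ℓ] = E[P_ℓ − P_{ℓ−1}] for ℓ > 0, (iii) Var[Y_ℓ] ≤ c₂·N_ℓ^{−1}·2^{−βℓ}, and (iv) the computational cost C_ℓ of Y_ℓ satisfies C_ℓ ≤ c₃·N_ℓ·2^{γℓ}. Then there exists a positive constant c₄ such that for every ε with 0 < ε < e^{−1} there are a level L and sample sizes N₀,…,N_L for which the multilevel estimator Y = Σ_{ℓ=0}^{L} Y_ℓ has mean-square error E[(Y − E[P])²] < ε², with total computational cost C = Σ_{ℓ=0}^{L} C_ℓ bounded by: C ≤ c₄·ε^{−2} if β > γ; C ≤ c₄·ε^{−2}(log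 ε)² if β = γ; and C ≤ c₄·ε^{−2−(γ−β)/α} if 0 < β < γ. -/
/-!
The mean-square error of the multilevel estimator is its variance plus its squared bias. The means
telescope, so the bias is the weak error at the finest level `L`, and it is at most `ε / 2` once
`b ^ (α * L)` is of order `ε⁻¹`, where `b` is the refinement factor. Minimising the cost
`∑ ℓ, N ℓ * C ℓ` at variance `∑ ℓ, V ℓ / N ℓ = v` by Lagrange multipliers gives
`N ℓ ∝ √(V ℓ / C ℓ)` and the cost `v⁻¹ * (∑ ℓ, √(V ℓ * C ℓ)) ^ 2`. Here `√(V ℓ * C ℓ)` is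
proportional to `b ^ ((γ - β) / 2 * ℓ)`, so the three regimes are those of a geometric sum. Rounding
`N ℓ` up costs at most one more sample per level, and `∑ ℓ ≤ L, b ^ (γ * ℓ)` does not exceed the
claimed order because `min β γ ≤ 2 * α`.
-/

open MeasureTheory ProbabilityTheory

lemma one_lt_neg_log {ε : ℝ} (hε : 0 < ε) (hε' : ε < Real.exp (-1)) : 1 < -Real.log ε :=
  lt_neg.2 ((Real.log_lt_iff_lt_exp hε).2 hε')

section GeometricSums

variable {b α K s : ℝ}

lemma sum_rpow_mul_le_of_neg (hb : 1 < b) (hs : s < 0) (n : ℕ) :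
    ∑ l ∈ Finset.range n, b ^ (s * l) ≤ 1 / (1 - b ^ s) := by
  have hb₀ : 0 ≤ b := zero_le_one.trans hb.le
  simp only [Real.rpow_mul_natCast hb₀]
  simpa only [Finset.range_eq_Ico, pow_zero] using geom_sum_Ico_le_of_lt_one (m := 0) (n := n)
    (Real.rpow_nonneg hb₀ s) (Real.rpow_lt_one_of_one_lt_of_neg hb hs)

lemma sum_rpow_mul_le_of_pos (hb : 1 < b) (hs : 0 < s) (L : ℕ) :
    ∑ l ∈ Finset.range (L + 1), b ^ (s * l) ≤ b ^ s / (b ^ s - 1) * b ^ (s * L) := by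
  have hb₀ : 0 < b := one_pos.trans hb
  have hbs : 1 < b ^ s := Real.one_lt_rpow hb hs
  simp only [Real.rpow_mul_natCast hb₀.le]
  rw [geom_sum_eq hbs.ne', div_mul_eq_mul_div, ← pow_succ']
  exact div_le_div_of_nonneg_right (sub_le_self _ zero_le_one) (sub_pos.2 hbs).le

lemma rpow_mul_le_rpow_div {x y : ℝ} (hb : 0 ≤ b) (hα : 0 < α) (hs : 0 ≤ s)
    (h : b ^ (α * x) ≤ y) : b ^ (s * x) ≤ y ^ (s / α) :=
  calc b ^ (s * x) = (b ^ (α * x)) ^ (s / α) := by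
        rw [← Real.rpow_mul hb]
        congr 1
        field_simp
    _ ≤ y ^ (s / α) := Real.rpow_le_rpow (by positivity) h (by positivity)

lemma exists_sum_rpow_mul_le_rpow_neg (hb : 1 < b) (hα : 0 < α) (hK : 0 < K) (hs : 0 < s) :
    ∃ G > 0, ∀ ε > 0, ∀ L : ℕ, b ^ (α * L) ≤ K / ε →
      ∑ l ∈ Finset.range (L + 1), b ^ (s * l) ≤ G * ε ^ (-(s / α)) := by
  have hbs : 0 < b ^ s - 1 := sub_pos.2 (Real.one_lt_rpow hb hs)
  refine ⟨b ^ s / (b ^ s - 1) * K ^ (s / α), by positivity, fun ε hε L hL => ?_⟩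
  calc ∑ l ∈ Finset.range (L + 1), b ^ (s * l)
      ≤ b ^ s / (b ^ s - 1) * b ^ (s * L) := sum_rpow_mul_le_of_pos hb hs L
    _ ≤ b ^ s / (b ^ s - 1) * (K / ε) ^ (s / α) := by
        gcongr
        exact rpow_mul_le_rpow_div (by positivity) hα hs.le hL
    _ = b ^ s / (b ^ s - 1) * K ^ (s / α) * ε ^ (-(s / α)) := by
        rw [Real.div_rpow hK.le hε.le, Real.rpow_neg hε.le]
        ring

lemma exists_natCast_add_one_le_neg_log (hb : 1 < b) (hα : 0 < α) (hK : 0 < K) :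
    ∃ D > 0, ∀ ε > 0, ε < Real.exp (-1) → ∀ L : ℕ, b ^ (α * L) ≤ K / ε →
      (L : ℝ) + 1 ≤ D * -Real.log ε := by
  have hb₀ : 0 < b := one_pos.trans hb
  have hlogb : 0 < Real.log b := Real.log_pos hb
  refine ⟨(|Real.log K| + 1) / (α * Real.log b) + 1, by positivity, fun ε hε hε' L hL => ?_⟩
  have hlog : 1 < -Real.log ε := one_lt_neg_log hε hε'
  have hL_log : L * (α * Real.log b) ≤ Real.log K - Real.log ε :=
    calc L * (α * Real.log b) = Real.log (b ^ (α * L)) := by rw [Real.log_rpow hb₀]; ring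
      _ ≤ Real.log (K / ε) := Real.log_le_log (by positivity) hL
      _ = Real.log K - Real.log ε := Real.log_div hK.ne' hε.ne'
  have hL_le : (L : ℝ) ≤ (|Real.log K| + 1) / (α * Real.log b) * -Real.log ε := by
    rw [div_mul_eq_mul_div, le_div_iff₀ (by positivity)]
    nlinarith [le_abs_self (Real.log K), abs_nonneg (Real.log K)]
  linarith

end GeometricSums

lemma exists_level_bias_le {b α : ℝ} (hb : 1 < b) (hα : 0 < α) (c₁ : ℝ) :
    ∃ K > 0, ∀ ε > 0, ε ≤ 1 → ∃ L : ℕ,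
      c₁ * b ^ (-(α * L)) ≤ ε / 2 ∧ b ^ (α * L) ≤ K / ε := by
  have hb₀ : 0 < b := one_pos.trans hb
  set M : ℝ := max (2 * c₁) 1
  have hM : 1 ≤ M := le_max_right _ _
  refine ⟨M * b ^ α, by positivity, fun ε hε hε' => ?_⟩
  obtain ⟨n, hn_le, hn_lt⟩ := exists_nat_pow_near
    ((one_le_div hε).2 (hε'.trans hM)) (Real.one_lt_rpow hb hα)
  refine ⟨n + 1, ?_, ?_⟩
  · rw [Real.rpow_neg hb₀.le, Real.rpow_mul_natCast hb₀.le, ← div_eq_mul_inv,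
      div_le_iff₀ (by positivity)]
    rw [div_lt_iff₀ hε] at hn_lt
    linarith [le_max_left (2 * c₁) 1]
  · rw [Real.rpow_mul_natCast hb₀.le, pow_succ, mul_div_right_comm]
    gcongr

section Rate

/-- The order of the cost of a multilevel Monte Carlo estimator as a function of the accuracy `ε`,
for weak order `α`, variance decay rate `β` and cost growth rate `γ`. -/
noncomputable def mlmcRate (α β γ ε : ℝ) : ℝ :=
  if γ < β then ε ^ (-2 : ℝ)
  else if β = γ then ε ^ (-2 : ℝ) * Real.log ε ^ 2
  else ε ^ (-2 - (γ - β) / α)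

variable {b α β γ K : ℝ}

lemma rpow_neg_max_div_le_mlmcRate {ε : ℝ} (hα : 0 < α) (hαβγ : 1 / 2 * min β γ ≤ α) (hε : 0 < ε)
    (hε' : ε < Real.exp (-1)) : ε ^ (-(max γ α / α)) ≤ mlmcRate α β γ ε := by
  have hlog : 1 < -Real.log ε := one_lt_neg_log hε hε'
  have hε₁ : ε ≤ 1 := (hε'.trans (Real.exp_lt_one_iff.2 neg_one_lt_zero)).le
  have rpow_le {p : ℝ} (hp : max γ α ≤ -p * α) : ε ^ (-(max γ α / α)) ≤ ε ^ p :=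
    Real.rpow_le_rpow_of_exponent_ge hε hε₁ (le_neg.2 ((div_le_iff₀ hα).2 hp))
  unfold mlmcRate
  split_ifs with hγβ heq
  · rw [min_eq_right hγβ.le] at hαβγ
    exact rpow_le (max_le (by linarith) (by linarith))
  · subst heq
    rw [min_self] at hαβγ
    exact (rpow_le (max_le (by linarith) (by linarith))).trans
      (le_mul_of_one_le_right (by positivity) (by nlinarith))
  · have hβγ : β ≤ γ := not_lt.1 hγβ
    rw [min_eq_left hβγ] at hαβγ
    have hexp : -(-2 - (γ - β) / α) * α = 2 * α + (γ - β) := by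
      field_simp
      ring
    exact rpow_le (hexp ▸ max_le (by linarith) (by linarith))

lemma exists_sum_rpow_mul_le_mlmcRate (hb : 1 < b) (hα : 0 < α)
    (hαβγ : 1 / 2 * min β γ ≤ α) (hK : 0 < K) :
    ∃ G > 0, ∀ ε > 0, ε < Real.exp (-1) → ∀ L : ℕ, b ^ (α * L) ≤ K / ε →
      ∑ l ∈ Finset.range (L + 1), b ^ (γ * l) ≤ G * mlmcRate α β γ ε := by
  -- `max γ α` is positive even when `γ` is not, and still small enough for the rate.
  obtain ⟨G, hG, hsum⟩ := exists_sum_rpow_mul_le_rpow_neg hb hα hK (lt_max_of_lt_right hα)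
  refine ⟨G, hG, fun ε hε hε' L hL => ?_⟩
  calc ∑ l ∈ Finset.range (L + 1), b ^ (γ * l)
      ≤ ∑ l ∈ Finset.range (L + 1), b ^ (max γ α * l) := by
        gcongr
        exacts [hb.le, le_max_left _ _]
    _ ≤ G * ε ^ (-(max γ α / α)) := hsum ε hε L hL
    _ ≤ G * mlmcRate α β γ ε := by
        gcongr
        exact rpow_neg_max_div_le_mlmcRate hα hαβγ hε hε'

lemma exists_sq_sum_rpow_mul_le_mlmcRate (hb : 1 < b) (hα : 0 < α) (hK : 0 < K) :
    ∃ G > 0, ∀ ε > 0, ε < Real.exp (-1) → ∀ L : ℕ, b ^ (α * L) ≤ K / ε →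
      ε ^ (-2 : ℝ) * (∑ l ∈ Finset.range (L + 1), b ^ ((γ - β) / 2 * l)) ^ 2
        ≤ G * mlmcRate α β γ ε := by
  unfold mlmcRate
  split_ifs with hγβ heq
  · have hs : (γ - β) / 2 < 0 := by linarith
    have hG : 0 < 1 - b ^ ((γ - β) / 2) := sub_pos.2 (Real.rpow_lt_one_of_one_lt_of_neg hb hs)
    refine ⟨(1 / (1 - b ^ ((γ - β) / 2))) ^ 2, by positivity, fun ε hε _ L _ => ?_⟩
    rw [mul_comm]
    gcongr
    exact sum_rpow_mul_le_of_neg hb hs _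
  · subst heq
    obtain ⟨D, hD, hL_le⟩ := exists_natCast_add_one_le_neg_log hb hα hK
    refine ⟨D ^ 2, by positivity, fun ε hε hε' L hL => ?_⟩
    have hsum : ∑ l ∈ Finset.range (L + 1), b ^ ((β - β) / 2 * l) = (L : ℝ) + 1 := by simp
    calc ε ^ (-2 : ℝ) * (∑ l ∈ Finset.range (L + 1), b ^ ((β - β) / 2 * l)) ^ 2
        ≤ ε ^ (-2 : ℝ) * (D * -Real.log ε) ^ 2 := by
          rw [hsum]
          gcongr
          exact hL_le ε hε hε' L hL
      _ = D ^ 2 * (ε ^ (-2 : ℝ) * Real.log ε ^ 2) := by ring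
  · have hs : 0 < (γ - β) / 2 := half_pos (sub_pos.2 ((not_lt.1 hγβ).lt_of_ne heq))
    obtain ⟨G, hG, hsum⟩ := exists_sum_rpow_mul_le_rpow_neg hb hα hK hs
    refine ⟨G ^ 2, by positivity, fun ε hε _ L hL => ?_⟩
    calc ε ^ (-2 : ℝ) * (∑ l ∈ Finset.range (L + 1), b ^ ((γ - β) / 2 * l)) ^ 2
        ≤ ε ^ (-2 : ℝ) * (G * ε ^ (-((γ - β) / 2 / α))) ^ 2 := by
          gcongr
          exact hsum ε hε L hL
      _ = G ^ 2 * ε ^ (-2 - (γ - β) / α) := by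
          rw [mul_pow, ← Real.rpow_mul_natCast hε.le, mul_left_comm, ← Real.rpow_add hε]
          congr 2
          push_cast
          ring

end Rate

lemma exists_pnat_le_and_le_add_one {x : ℝ} (hx : 0 ≤ x) : ∃ N : ℕ+, x ≤ N ∧ N ≤ x + 1 := by
  rcases hx.eq_or_lt with rfl | hx_pos
  · exact ⟨1, by simp⟩
  · exact ⟨⟨⌈x⌉₊, Nat.ceil_pos.2 hx_pos⟩, Nat.le_ceil x, (Nat.ceil_lt_add_one hx).le⟩

lemma exists_sample_sizes {ι : Type*} (s : Finset ι) {V C : ι → ℝ} (hV : ∀ i, 0 ≤ V i)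
    (hC : ∀ i, 0 < C i) {v : ℝ} (hv : 0 < v) :
    ∃ N : ι → ℕ+, ∑ i ∈ s, V i / N i ≤ v ∧
      ∑ i ∈ s, N i * C i ≤ v⁻¹ * (∑ i ∈ s, √(V i * C i)) ^ 2 + ∑ i ∈ s, C i := by
  set S : ℝ := ∑ i ∈ s, √(V i * C i) with hS
  have hS₀ : 0 ≤ S := Finset.sum_nonneg fun _ _ => Real.sqrt_nonneg _
  -- The Lagrange optimum for real sample sizes.
  let x (i : ι) : ℝ := v⁻¹ * S * √(V i / C i)
  have hx (i : ι) : 0 ≤ x i :=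
    mul_nonneg (mul_nonneg (inv_pos.2 hv).le hS₀) (Real.sqrt_nonneg _)
  choose N le_N N_le using fun i => exists_pnat_le_and_le_add_one (hx i)
  have hsqrt (i : ι) : √(V i / C i) * C i = √(V i * C i) := by
    rw [Real.sqrt_div (hV i), Real.sqrt_mul (hV i), div_mul_eq_mul_div, mul_div_assoc,
      Real.div_sqrt]
  refine ⟨N, ?_, ?_⟩
  · have variance_le (i) (hi : i ∈ s) : V i / N i ≤ v * (√(V i * C i) / S) := by
      rcases (hV i).eq_or_lt with hVi | hVi
      · simp [← hVi]
      have hVC : 0 < √(V i * C i) := Real.sqrt_pos.2 (mul_pos hVi (hC i))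
      have hS_pos : 0 < S :=
        hVC.trans_le (Finset.single_le_sum (f := fun j => √(V j * C j))
          (fun _ _ => Real.sqrt_nonneg _) hi)
      have hV_eq : V i = v * (√(V i * C i) / S) * x i :=
        calc V i = √(V i * C i) * √(V i / C i) := by
              rw [← hsqrt, mul_right_comm, Real.mul_self_sqrt (div_nonneg (hV i) (hC i).le),
                div_mul_cancel₀ _ (hC i).ne']
          _ = v * (√(V i * C i) / S) * x i := by
              simp only [x]
              field_simp
      rw [div_le_iff₀ (by positivity)]
      exact hV_eq.trans_le (by gcongr; exact le_N i)
    calc ∑ i ∈ s, V i / N i ≤ ∑ i ∈ s, v * (√(V i * C i) / S) := Finset.sum_le_sum variance_le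
      _ = v * (S / S) := by rw [← Finset.mul_sum, ← Finset.sum_div]
      _ ≤ v := mul_le_of_le_one_right hv.le (div_self_le_one S)
  · calc ∑ i ∈ s, N i * C i ≤ ∑ i ∈ s, (v⁻¹ * S * √(V i * C i) + C i) := by
          refine Finset.sum_le_sum fun i _ => ?_
          rw [← hsqrt, ← mul_assoc, ← add_one_mul]
          exact mul_le_mul_of_nonneg_right (N_le i) (hC i).le
      _ = v⁻¹ * S ^ 2 + ∑ i ∈ s, C i := by
          rw [Finset.sum_add_distrib, ← Finset.mul_sum, ← hS, mul_assoc, ← sq]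

section MeanSquareError

variable {Ω : Type*} [MeasurableSpace Ω] {μ : Measure Ω}

lemma integral_sub_const_sq [IsProbabilityMeasure μ] {X : Ω → ℝ} (hX : MemLp X 2 μ) (m : ℝ) :
    ∫ ω, (X ω - m) ^ 2 ∂μ = Var[X; μ] + (μ[X] - m) ^ 2 := by
  have hvar := variance_eq_sub (X := fun ω => X ω - m) (hX.sub (memLp_const m))
  rw [variance_sub_const hX.aestronglyMeasurable,
    integral_sub (hX.integrable one_le_two) (integrable_const m), integral_const, probReal_univ,
    one_smul] at hvar
  exact sub_eq_iff_eq_add.1 hvar.symm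

lemma variance_sum_of_covariance_eq_zero [IsFiniteMeasure μ] {ι : Type*} {X : ι → Ω → ℝ}
    {s : Finset ι} (hX : ∀ i ∈ s, MemLp (X i) 2 μ)
    (hcov : (s : Set ι).Pairwise fun i j => cov[X i, X j; μ] = 0) :
    Var[∑ i ∈ s, X i; μ] = ∑ i ∈ s, Var[X i; μ] := by
  rw [variance_sum' hX]
  refine Finset.sum_congr rfl fun i hi => ?_
  rw [← covariance_self (hX i hi).aemeasurable]
  exact Finset.sum_eq_single_of_mem i hi fun j hj hji => hcov hi hj hji.symm

lemma integral_sum_sub_const_sq [IsProbabilityMeasure μ] {ι : Type*} {X : ι → Ω → ℝ}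
    {s : Finset ι} (hX : ∀ i ∈ s, MemLp (X i) 2 μ)
    (hcov : (s : Set ι).Pairwise fun i j => cov[X i, X j; μ] = 0) (m : ℝ) :
    ∫ ω, ((∑ i ∈ s, X i ω) - m) ^ 2 ∂μ = ∑ i ∈ s, Var[X i; μ] + (∑ i ∈ s, μ[X i] - m) ^ 2 := by
  have hmse := integral_sub_const_sq (memLp_finsetSum' s hX) m
  rw [variance_sum_of_covariance_eq_zero hX hcov] at hmse
  simpa only [Finset.sum_apply, integral_finsetSum s fun i hi => (hX i hi).integrable one_le_two]
    using hmse

end MeanSquareError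

lemma exists_level_sample_sizes {b α β γ c₁ c₂ c₃ : ℝ} (hb : 1 < b) (hα : 0 < α) (hc₂ : 0 ≤ c₂)
    (hc₃ : 0 < c₃) (hαβγ : 1 / 2 * min β γ ≤ α) :
    ∃ c₄ > 0, ∀ ε > 0, ε < Real.exp (-1) → ∃ (L : ℕ) (N : ℕ → ℕ+),
      c₁ * b ^ (-(α * L)) ≤ ε / 2 ∧
      ∑ l ∈ Finset.range (L + 1), c₂ * (N l : ℝ)⁻¹ * b ^ (-(β * l)) ≤ ε ^ 2 / 2 ∧
      ∑ l ∈ Finset.range (L + 1), c₃ * (N l : ℝ) * b ^ (γ * l) ≤ c₄ * mlmcRate α β γ ε := by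
  have hb₀ : 0 < b := one_pos.trans hb
  obtain ⟨K, hK, hlevel⟩ := exists_level_bias_le hb hα c₁
  obtain ⟨G, hG, hsampling⟩ := exists_sq_sum_rpow_mul_le_mlmcRate (β := β) (γ := γ) hb hα hK
  obtain ⟨R, hR, hrounding⟩ := exists_sum_rpow_mul_le_mlmcRate hb hα hαβγ hK
  refine ⟨c₃ * (2 * c₂ * G + R), by positivity, fun ε hε hε' => ?_⟩
  obtain ⟨L, hbias, hL⟩ := hlevel ε hε (hε'.trans (Real.exp_lt_one_iff.2 neg_one_lt_zero)).le
  obtain ⟨N, hvariance, hcost⟩ := exists_sample_sizes (Finset.range (L + 1))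
    (V := fun l => c₂ * b ^ (-(β * l))) (C := fun l => b ^ (γ * l)) (fun _ => by positivity)
    (fun _ => by positivity) (v := ε ^ 2 / 2) (by positivity)
  have hsqrt (l : ℕ) : √(c₂ * b ^ (-(β * l)) * b ^ (γ * l)) = √c₂ * b ^ ((γ - β) / 2 * l) := by
    rw [mul_assoc, Real.sqrt_mul hc₂, ← Real.rpow_add hb₀, Real.sqrt_eq_rpow (b ^ _),
      ← Real.rpow_mul hb₀.le]
    ring_nf
  refine ⟨L, N, hbias, ?_, ?_⟩
  · simpa only [mul_right_comm, div_eq_mul_inv] using hvariance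
  · simp only [hsqrt, ← Finset.mul_sum, mul_pow, Real.sq_sqrt hc₂] at hcost
    calc ∑ l ∈ Finset.range (L + 1), c₃ * (N l : ℝ) * b ^ (γ * l)
        = c₃ * ∑ l ∈ Finset.range (L + 1), N l * b ^ (γ * l) := by
          simp only [mul_assoc, Finset.mul_sum]
      _ ≤ c₃ * (2 * c₂ * (ε ^ (-2 : ℝ) *
            (∑ l ∈ Finset.range (L + 1), b ^ ((γ - β) / 2 * l)) ^ 2) +
            ∑ l ∈ Finset.range (L + 1), b ^ (γ * l)) := by
          gcongr
          refine hcost.trans_eq ?_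
          rw [Real.rpow_neg hε.le, Real.rpow_two]
          field_simp
      _ ≤ c₃ * (2 * c₂ * (G * mlmcRate α β γ ε) + R * mlmcRate α β γ ε) := by
          gcongr c₃ * (2 * c₂ * ?_ + ?_)
          exacts [hsampling ε hε hε' L hL, hrounding ε hε hε' L hL]
      _ = c₃ * (2 * c₂ * G + R) * mlmcRate α β γ ε := by ring

theorem mlmc_complexity_general
    {Ω : Type*} [MeasurableSpace Ω] {μ : Measure Ω} [IsProbabilityMeasure μ]
    {m : ℝ} {a : ℕ → ℝ} {Y : ℕ → ℕ+ → Ω → ℝ} {cost : ℕ → ℕ+ → ℝ} {b α β γ c₁ c₂ c₃ : ℝ}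
    (hb : 1 < b) (hα : 0 < α) (hc₂ : 0 ≤ c₂) (hc₃ : 0 < c₃) (hαβγ : 1 / 2 * min β γ ≤ α)
    (hY : ∀ ℓ N, MemLp (Y ℓ N) 2 μ)
    (hYcov : ∀ Ns : ℕ → ℕ+, Pairwise fun i j => cov[Y i (Ns i), Y j (Ns j); μ] = 0)
    (hweak : ∀ ℓ : ℕ, |a ℓ - m| ≤ c₁ * b ^ (-(α * ℓ)))
    (hmean0 : ∀ N, ∫ ω, Y 0 N ω ∂μ = a 0)
    (hmean : ∀ ℓ N, 0 < ℓ → ∫ ω, Y ℓ N ω ∂μ = a ℓ - a (ℓ - 1))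
    (hvar : ∀ ℓ N, Var[Y ℓ N; μ] ≤ c₂ * (N : ℝ)⁻¹ * b ^ (-(β * ℓ)))
    (hcost : ∀ ℓ N, cost ℓ N ≤ c₃ * (N : ℝ) * b ^ (γ * ℓ)) :
    ∃ c₄ > 0, ∀ ε : ℝ, 0 < ε → ε < Real.exp (-1) →
      ∃ (L : ℕ) (Ns : ℕ → ℕ+),
        ∫ ω, ((∑ ℓ ∈ Finset.range (L + 1), Y ℓ (Ns ℓ) ω) - m) ^ 2 ∂μ < ε ^ 2 ∧
        ∑ ℓ ∈ Finset.range (L + 1), cost ℓ (Ns ℓ) ≤ c₄ * mlmcRate α β γ ε := by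
  obtain ⟨c₄, hc₄, hchoice⟩ := exists_level_sample_sizes hb hα hc₂ hc₃ hαβγ
  refine ⟨c₄, hc₄, fun ε hε hε' => ?_⟩
  obtain ⟨L, Ns, hbias, hvariance, htotal⟩ := hchoice ε hε hε'
  refine ⟨L, Ns, ?_, (Finset.sum_le_sum fun ℓ _ => hcost ℓ (Ns ℓ)).trans htotal⟩
  have hmean_sum : ∑ ℓ ∈ Finset.range (L + 1), ∫ ω, Y ℓ (Ns ℓ) ω ∂μ = a L := by
    rw [Finset.eq_sum_range_sub' a L]
    refine Finset.sum_congr rfl fun ℓ _ => ?_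
    split_ifs with hℓ
    · rw [hℓ, hmean0]
    · exact hmean ℓ _ (Nat.pos_of_ne_zero hℓ)
  have hbias_sq : (a L - m) ^ 2 ≤ (ε / 2) ^ 2 :=
    sq_le_sq' (abs_le.1 ((hweak L).trans hbias)).1 (abs_le.1 ((hweak L).trans hbias)).2
  rw [integral_sum_sub_const_sq (fun ℓ _ => hY ℓ (Ns ℓ)) ((hYcov Ns).set_pairwise _), hmean_sum]
  have hvar_sum : ∑ ℓ ∈ Finset.range (L + 1), Var[Y ℓ (Ns ℓ); μ] ≤ ε ^ 2 / 2 :=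
    (Finset.sum_le_sum fun ℓ _ => hvar ℓ (Ns ℓ)).trans hvariance
  linarith [pow_pos hε 2]

open scoped Classical in
/-- the multilevel Monte Carlo complexity theorem.
`P` is a square-integrable payoff, `Papp ℓ` its level-`ℓ` approximation, and for each level `ℓ`
and sample size `N` there is an estimator `Y ℓ N` (estimators at different levels being
independent) with `E[Y 0 N] = E[Papp 0]`, `E[Y ℓ N] = E[Papp ℓ − Papp (ℓ−1)]` for `ℓ > 0`,
`Var[Y ℓ N] ≤ c₂ N⁻¹ 2^{−βℓ}`, cost `cost ℓ N ≤ c₃ N 2^{γℓ}`, and weak error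
`|E[Papp ℓ − P]| ≤ c₁ 2^{−αℓ}`, where `α ≥ ½ min(β,γ)`.  Then there is `c₄ > 0` such that
for every `0 < ε < e⁻¹` one can choose `L` and sample sizes `Ns ℓ` so that the multilevel
estimator `Y = ∑_{ℓ≤L} Y ℓ (Ns ℓ)` has mean-square error below `ε²` at total cost bounded by
`c₄ ε⁻²`, `c₄ ε⁻² (log ε)²`, or `c₄ ε^{−2−(γ−β)/α}` according as `β > γ`, `β = γ`, `β < γ`. -/
theorem mlmc_complexity
    {Ω : Type*} [MeasurableSpace Ω] (μ : Measure Ω) [IsProbabilityMeasure μ]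
    (P : Ω → ℝ) (Papp : ℕ → Ω → ℝ) (Y : ℕ → ℕ+ → Ω → ℝ) (cost : ℕ → ℕ+ → ℝ)
    (α β γ c₁ c₂ c₃ : ℝ)
    (hα : 0 < α) (hβ : 0 < β) (hγ : 0 < γ)
    (hc₁ : 0 < c₁) (hc₂ : 0 < c₂) (hc₃ : 0 < c₃)
    (hαβγ : (1 / 2) * min β γ ≤ α)
    (hP : MemLp P 2 μ)
    (hPapp : ∀ ℓ, MemLp (Papp ℓ) 2 μ)
    (hY : ∀ ℓ N, MemLp (Y ℓ N) 2 μ)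
    (hYindep : ∀ Ns : ℕ → ℕ+,
      iIndepFun (fun ℓ => Y ℓ (Ns ℓ)) μ)
    (hweak : ∀ ℓ : ℕ,
      |(∫ ω, Papp ℓ ω ∂μ) - ∫ ω, P ω ∂μ| ≤ c₁ * (2 : ℝ) ^ (-(α * ℓ)))
    (hmean0 : ∀ N, ∫ ω, Y 0 N ω ∂μ = ∫ ω, Papp 0 ω ∂μ)
    (hmean : ∀ ℓ N, 0 < ℓ →
      ∫ ω, Y ℓ N ω ∂μ = (∫ ω, Papp ℓ ω ∂μ) - ∫ ω, Papp (ℓ - 1) ω ∂μ)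
    (hvar : ∀ ℓ N, variance (Y ℓ N) μ ≤ c₂ * ((N : ℝ))⁻¹ * (2 : ℝ) ^ (-(β * ℓ)))
    (hcost : ∀ ℓ N, cost ℓ N ≤ c₃ * (N : ℝ) * (2 : ℝ) ^ (γ * ℓ)) :
    ∃ c₄ > (0 : ℝ), ∀ ε : ℝ, 0 < ε → ε < Real.exp (-1) →
      ∃ (L : ℕ) (Ns : ℕ → ℕ+),
        (∫ ω, ((∑ ℓ ∈ Finset.range (L + 1), Y ℓ (Ns ℓ) ω) - ∫ ω', P ω' ∂μ) ^ 2 ∂μ) < ε ^ 2 ∧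
        (∑ ℓ ∈ Finset.range (L + 1), cost ℓ (Ns ℓ)) ≤
          if γ < β then c₄ * ε ^ (-2 : ℝ)
          else if β = γ then c₄ * ε ^ (-2 : ℝ) * Real.log ε ^ 2
          else c₄ * ε ^ (-2 - (γ - β) / α) := by
  simpa only [mlmcRate, mul_ite, mul_assoc] using
    mlmc_complexity_general one_lt_two hα hc₂.le hc₃ hαβγ hY
      (fun Ns _ _ hij => ((hYindep Ns).indepFun hij).covariance_eq_zero (hY _ _) (hY _ _))
      hweak hmean0 hmean hvar hcost
end

section
/- Let d ≥ 1, let P : ℝ^d → ℝ be twice continuously differentiable, and suppose there exist constants L₁, L₂ such that ‖DP(x)‖ ≤ L₁ and ‖D²P(x)‖ ≤ L₂ for all x ∈ ℝ^d. Then for any three ℝ^d-valued random variables X^f, X^a, X^c on a common probability space and any real p ≥ 2, E[ |(1/2)(P(X^f) + P(X^a)) − P(X^c)|^p ] ≤ 2^{p−1}·L₁^p·E[ ‖(1/2)(X^f + X^a) − X^c‖^p ] + 2^{−(p+1)}·L₂^p·E[ ‖X^f − X^a‖^{2p} ]. -/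
open MeasureTheory ProbabilityTheory

/-!
Let `m` be the midpoint of `x` and `y`. The first-order Taylor expansions of `f` at `m` in the
opposite directions `x - m` and `y - m` have linear terms that cancel on averaging, so
`½ (f x + f y)` is within `O(‖x - y‖²)` of `f m`, while `f m` is within `O(‖m - z‖)` of `f z`.
Convexity of `t ↦ t ^ p` separates the two errors before integrating.
-/

open scoped NNReal

section Deterministic

variable {E F : Type*} [NormedAddCommGroup E] [NormedSpace ℝ E]
  [NormedAddCommGroup F] [NormedSpace ℝ F] {f : E → F} {K K₁ K₂ : ℝ≥0}

theorem lipschitzWith_fderiv_of_norm_iteratedFDeriv_two_le (hf : ContDiff ℝ 2 f)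
    (bound : ∀ x, ‖iteratedFDeriv ℝ 2 f x‖ ≤ K) : LipschitzWith K (fderiv ℝ f) := by
  have hf' : Differentiable ℝ (fderiv ℝ f) :=
    (hf.fderiv_right (m := 1) (by norm_num)).differentiable one_ne_zero
  refine lipschitzWith_of_nnnorm_fderiv_le hf' fun x ↦ ?_
  have norm_eq : ‖fderiv ℝ (fderiv ℝ f) x‖ = ‖iteratedFDeriv ℝ 2 f x‖ := by
    rw [← norm_iteratedFDeriv_fderiv, ← norm_iteratedFDeriv_fderiv, norm_iteratedFDeriv_zero]
  exact norm_eq.trans_le (bound x)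

theorem norm_sub_sub_fderiv_le_of_lipschitzWith_fderiv (hf : Differentiable ℝ f)
    (hf' : LipschitzWith K (fderiv ℝ f)) (m x : E) :
    ‖f x - f m - fderiv ℝ f m (x - m)‖ ≤ K * ‖x - m‖ ^ 2 := by
  have fderiv_close : ∀ u ∈ Metric.closedBall m ‖x - m‖,
      ‖fderiv ℝ f u - fderiv ℝ f m‖ ≤ K * ‖x - m‖ := fun u hu ↦
    (hf'.norm_sub_le u m).trans <| by gcongr; exact mem_closedBall_iff_norm.mp hu
  calc ‖f x - f m - fderiv ℝ f m (x - m)‖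
      ≤ K * ‖x - m‖ * ‖x - m‖ :=
        (convex_closedBall m ‖x - m‖).norm_image_sub_le_of_norm_fderiv_le'
          (fun u _ ↦ hf u) fderiv_close (Metric.mem_closedBall_self (norm_nonneg _))
          (mem_closedBall_iff_norm.mpr le_rfl)
    _ = K * ‖x - m‖ ^ 2 := by ring

theorem norm_midpoint_sub_apply_midpoint_le (hf : Differentiable ℝ f)
    (hf' : LipschitzWith K (fderiv ℝ f)) (x y : E) :
    ‖midpoint ℝ (f x) (f y) - f (midpoint ℝ x y)‖ ≤ K / 4 * ‖x - y‖ ^ 2 := by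
  set m := midpoint ℝ x y with hm
  set R : E → F := fun u ↦ f u - f m - fderiv ℝ f m (u - m) with hR
  have norm_R_le (u : E) (hu : ‖u - m‖ = ‖x - y‖ / 2) : ‖R u‖ ≤ K / 4 * ‖x - y‖ ^ 2 := by
    have taylor := norm_sub_sub_fderiv_le_of_lipschitzWith_fderiv hf hf' m u
    rw [hu] at taylor
    linarith
  have norm_x_sub : ‖x - m‖ = ‖x - y‖ / 2 := by
    simp [hm, left_sub_midpoint, norm_smul, div_eq_inv_mul]
  have norm_y_sub : ‖y - m‖ = ‖x - y‖ / 2 := by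
    simp [hm, right_sub_midpoint, norm_smul, div_eq_inv_mul, norm_sub_rev y x]
  have linear_cancel : fderiv ℝ f m (y - m) = -fderiv ℝ f m (x - m) := by
    rw [← map_neg, hm, left_sub_midpoint, right_sub_midpoint, ← smul_neg, neg_sub]
  have defect_eq : midpoint ℝ (f x) (f y) - f m = midpoint ℝ (R x) (R y) := by
    simp only [hR, linear_cancel, midpoint_eq_smul_add, invOf_eq_inv]
    module
  calc ‖midpoint ℝ (f x) (f y) - f m‖
      = ‖midpoint ℝ (R x) (R y)‖ := by rw [defect_eq]
    _ ≤ (‖R x‖ + ‖R y‖) / 2 := by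
        simpa using dist_midpoint_midpoint_le (R x) (R y) 0 0
    _ ≤ K / 4 * ‖x - y‖ ^ 2 := by
        linarith [norm_R_le x norm_x_sub, norm_R_le y norm_y_sub]

theorem norm_midpoint_sub_apply_le (hf : Differentiable ℝ f) (hf₁ : LipschitzWith K₁ f)
    (hf₂ : LipschitzWith K₂ (fderiv ℝ f)) (x y z : E) :
    ‖midpoint ℝ (f x) (f y) - f z‖ ≤
      K₁ * ‖midpoint ℝ x y - z‖ + K₂ / 4 * ‖x - y‖ ^ 2 :=
  calc ‖midpoint ℝ (f x) (f y) - f z‖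
      ≤ ‖midpoint ℝ (f x) (f y) - f (midpoint ℝ x y)‖ + ‖f (midpoint ℝ x y) - f z‖ :=
        norm_sub_le_norm_sub_add_norm_sub _ _ _
    _ ≤ K₂ / 4 * ‖x - y‖ ^ 2 + K₁ * ‖midpoint ℝ x y - z‖ :=
        add_le_add (norm_midpoint_sub_apply_midpoint_le hf hf₂ x y) (hf₁.norm_sub_le _ _)
    _ = K₁ * ‖midpoint ℝ x y - z‖ + K₂ / 4 * ‖x - y‖ ^ 2 := add_comm _ _

theorem rpow_mul_add_div_four_mul_sq_le (K₁ K₂ a b : ℝ≥0) {p : ℝ} (hp : 1 ≤ p) :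
    (K₁ * a + K₂ / 4 * b ^ 2) ^ p ≤
      2 ^ (p - 1) * K₁ ^ p * a ^ p + 2 ^ (-(p + 1)) * K₂ ^ p * b ^ (2 * p) := by
  have two_rpow : (2 : ℝ≥0) ^ (-(p + 1)) = 2 ^ (p - 1) / 4 ^ p := by
    rw [show (4 : ℝ≥0) = 2 ^ (2 : ℝ) by norm_num, ← NNReal.rpow_mul,
      ← NNReal.rpow_sub two_ne_zero]
    ring_nf
  have sq_rpow : (b ^ 2) ^ p = b ^ (2 * p) := by rw [NNReal.rpow_mul, NNReal.rpow_two]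
  calc (K₁ * a + K₂ / 4 * b ^ 2) ^ p
      ≤ 2 ^ (p - 1) * ((K₁ * a) ^ p + (K₂ / 4 * b ^ 2) ^ p) :=
        NNReal.rpow_add_le_mul_rpow_add_rpow _ _ hp
    _ = 2 ^ (p - 1) * K₁ ^ p * a ^ p + 2 ^ (-(p + 1)) * K₂ ^ p * b ^ (2 * p) := by
        rw [two_rpow, NNReal.mul_rpow, NNReal.mul_rpow, NNReal.div_rpow, sq_rpow]
        ring

theorem norm_midpoint_sub_apply_rpow_le (hf : Differentiable ℝ f) (hf₁ : LipschitzWith K₁ f)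
    (hf₂ : LipschitzWith K₂ (fderiv ℝ f)) {p : ℝ} (hp : 1 ≤ p) (x y z : E) :
    ‖midpoint ℝ (f x) (f y) - f z‖ ^ p ≤
      2 ^ (p - 1) * K₁ ^ p * ‖midpoint ℝ x y - z‖ ^ p
        + 2 ^ (-(p + 1)) * K₂ ^ p * ‖x - y‖ ^ (2 * p) :=
  calc ‖midpoint ℝ (f x) (f y) - f z‖ ^ p
      ≤ (K₁ * ‖midpoint ℝ x y - z‖ + K₂ / 4 * ‖x - y‖ ^ 2) ^ p :=
        Real.rpow_le_rpow (norm_nonneg _) (norm_midpoint_sub_apply_le hf hf₁ hf₂ x y z)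
          (zero_le_one.trans hp)
    _ ≤ _ := mod_cast rpow_mul_add_div_four_mul_sq_le K₁ K₂ ‖midpoint ℝ x y - z‖₊ ‖x - y‖₊ hp

end Deterministic

theorem antithetic_payoff_lemma_general {E F : Type*} [NormedAddCommGroup E] [NormedSpace ℝ E]
    [NormedAddCommGroup F] [NormedSpace ℝ F] {P : E → F} {L₁ L₂ : ℝ≥0}
    (hP : Differentiable ℝ P) (hP₁ : LipschitzWith L₁ P) (hP₂ : LipschitzWith L₂ (fderiv ℝ P))
    {Ω : Type*} [MeasurableSpace Ω] {μ : Measure Ω} {Xf Xa Xc : Ω → E}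
    (hXf : AEStronglyMeasurable Xf μ) (hXa : AEStronglyMeasurable Xa μ)
    (hXc : AEStronglyMeasurable Xc μ) {p : ℝ} (hp : 1 ≤ p)
    (hint₁ : Integrable (fun ω ↦ ‖midpoint ℝ (Xf ω) (Xa ω) - Xc ω‖ ^ p) μ)
    (hint₂ : Integrable (fun ω ↦ ‖Xf ω - Xa ω‖ ^ (2 * p)) μ) :
    Integrable (fun ω ↦ ‖midpoint ℝ (P (Xf ω)) (P (Xa ω)) - P (Xc ω)‖ ^ p) μ ∧
      ∫ ω, ‖midpoint ℝ (P (Xf ω)) (P (Xa ω)) - P (Xc ω)‖ ^ p ∂μ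
        ≤ 2 ^ (p - 1) * L₁ ^ p * ∫ ω, ‖midpoint ℝ (Xf ω) (Xa ω) - Xc ω‖ ^ p ∂μ
          + 2 ^ (-(p + 1)) * L₂ ^ p * ∫ ω, ‖Xf ω - Xa ω‖ ^ (2 * p) ∂μ := by
  have pointwise (ω : Ω) := norm_midpoint_sub_apply_rpow_le hP hP₁ hP₂ hp (Xf ω) (Xa ω) (Xc ω)
  have bound₁ := hint₁.const_mul (2 ^ (p - 1) * (L₁ : ℝ) ^ p)
  have bound₂ := hint₂.const_mul (2 ^ (-(p + 1)) * (L₂ : ℝ) ^ p)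
  have comp_aesm {X : Ω → E} (hX : AEStronglyMeasurable X μ) :
      AEStronglyMeasurable (fun ω ↦ P (X ω)) μ := hP.continuous.comp_aestronglyMeasurable hX
  have defect_aesm :
      AEStronglyMeasurable (fun ω ↦ midpoint ℝ (P (Xf ω)) (P (Xa ω)) - P (Xc ω)) μ := by
    simp only [midpoint_eq_smul_add]
    exact (((comp_aesm hXf).add (comp_aesm hXa)).const_smul _).sub (comp_aesm hXc)
  have integrable_defect :
      Integrable (fun ω ↦ ‖midpoint ℝ (P (Xf ω)) (P (Xa ω)) - P (Xc ω)‖ ^ p) μ := by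
    refine (bound₁.add bound₂).mono' ?_ (.of_forall fun ω ↦ ?_)
    · exact (defect_aesm.norm.aemeasurable.pow_const p).aestronglyMeasurable
    · exact (Real.norm_of_nonneg (by positivity)).trans_le (pointwise ω)
  refine ⟨integrable_defect, ?_⟩
  rw [← integral_const_mul, ← integral_const_mul, ← integral_add bound₁ bound₂]
  exact integral_mono integrable_defect (bound₁.add bound₂) pointwise

/-- the key antithetic payoff lemma.  If `P : ℝ^d → ℝ` is `C²` with
`‖DP(x)‖ ≤ L₁` and `‖D²P(x)‖ ≤ L₂` everywhere, then for any ℝ^d-valued random variables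
`Xf, Xa, Xc` on a common probability space and any real `p ≥ 2`,
`E[|½(P(Xf)+P(Xa)) − P(Xc)|^p]
  ≤ 2^{p−1} L₁^p E[‖½(Xf+Xa) − Xc‖^p] + 2^{−(p+1)} L₂^p E[‖Xf − Xa‖^{2p}]`,
the expectations on the right being assumed finite. -/
theorem antithetic_payoff_lemma {d : ℕ}
    (P : EuclideanSpace ℝ (Fin d) → ℝ) (L₁ L₂ : ℝ)
    (hL₁ : 0 ≤ L₁) (hL₂ : 0 ≤ L₂)
    (hP : ContDiff ℝ 2 P)
    (hDP : ∀ x, ‖fderiv ℝ P x‖ ≤ L₁)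
    (hD2P : ∀ x, ‖iteratedFDeriv ℝ 2 P x‖ ≤ L₂)
    {Ω : Type*} [MeasurableSpace Ω] (μ : Measure Ω) [IsProbabilityMeasure μ]
    (Xf Xa Xc : Ω → EuclideanSpace ℝ (Fin d))
    (hXf : Measurable Xf) (hXa : Measurable Xa) (hXc : Measurable Xc)
    (p : ℝ) (hp : 2 ≤ p)
    (hint1 : Integrable (fun ω => ‖(2⁻¹ : ℝ) • (Xf ω + Xa ω) - Xc ω‖ ^ p) μ)
    (hint2 : Integrable (fun ω => ‖Xf ω - Xa ω‖ ^ (2 * p)) μ) :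
    ∫ ω, |(1 / 2) * (P (Xf ω) + P (Xa ω)) - P (Xc ω)| ^ p ∂μ
      ≤ (2 : ℝ) ^ (p - 1) * L₁ ^ p
          * ∫ ω, ‖(2⁻¹ : ℝ) • (Xf ω + Xa ω) - Xc ω‖ ^ p ∂μ
        + (2 : ℝ) ^ (-(p + 1)) * L₂ ^ p
          * ∫ ω, ‖Xf ω - Xa ω‖ ^ (2 * p) ∂μ := by
  lift L₁ to ℝ≥0 using hL₁
  lift L₂ to ℝ≥0 using hL₂
  have hP' : Differentiable ℝ P := hP.differentiable two_ne_zero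
  simpa [midpoint_eq_smul_add] using (antithetic_payoff_lemma_general hP'
    (lipschitzWith_of_nnnorm_fderiv_le hP' hDP)
    (lipschitzWith_fderiv_of_norm_iteratedFDeriv_two_le hP hD2P)
    hXf.aestronglyMeasurable hXa.aestronglyMeasurable hXc.aestronglyMeasurable
    (one_le_two.trans hp) (by simpa [midpoint_eq_smul_add] using hint1) hint2).2
end

section
/- In the Clark–Cameron antithetic setting, the following hold: (1) X^f_{1,n} = X^a_{1,n} = X^c_{1,n} for all 0 ≤ n ≤ N; (2) (1/2)(X^f_{2,n} + X^a_{2,n}) = X^c_{2,n} for all 0 ≤ n ≤ N; and (3) E[ (X^f_{2,N} − X^a_{2,N})⁴ ] = (3/4)·T·(T + Δt)·Δt². -/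
/-!
Two Milstein paths driven by the same increments differ only in the weight of the Lévy area term,
so `Xf₂ N - Xa₂ N` is the sum of `N` independent centred Lévy areas `a d - c b`. The fourth
cumulant is additive over independent summands, hence the fourth moment of this sum is
`N κ₄ + 3 (N σ²)²`, where `σ²` and `κ₄` are the variance and fourth cumulant of a single area.
These are computed from the moments of the increments up to order four.
-/

open MeasureTheory ProbabilityTheory
open scoped ENNReal NNReal

section Independence

variable {Ω ι : Type*} [MeasurableSpace Ω] {μ : Measure Ω} {κ : ι → Type*}
  {𝓧 : (i : ι) → κ i → Type*} [∀ i j, MeasurableSpace (𝓧 i j)]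

lemma iIndepFun_curry {X : (i : ι) → (j : κ i) → Ω → 𝓧 i j}
    (hX : AEMeasurable (fun ω (p : (i : ι) × κ i) ↦ X p.1 p.2 ω) μ)
    (h : iIndepFun (fun (p : (i : ι) × κ i) ↦ X p.1 p.2) μ) :
    iIndepFun (fun i ω j ↦ X i j ω) μ := by
  have := h.isProbabilityMeasure
  have (i : ι) (j : κ i) : IsProbabilityMeasure (μ.map (X i j)) :=
    Measure.isProbabilityMeasure_map (hX.eval ⟨i, j⟩)
  have aemeasurable_curry : AEMeasurable (fun ω i j ↦ X i j ω) μ :=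
    (MeasurableEquiv.piCurry 𝓧).measurable.comp_aemeasurable hX
  have row_law (i : ι) :
      μ.map (fun ω j ↦ X i j ω) = Measure.infinitePi fun j ↦ μ.map (X i j) :=
    (h.precomp (g := Sigma.mk i) sigma_mk_injective).map_fun_eq_infinitePi_map₀
      (aemeasurable_curry.eval i)
  rw [iIndepFun_iff_map_fun_eq_infinitePi_map₀ aemeasurable_curry]
  calc μ.map (fun ω i j ↦ X i j ω)
      = (μ.map fun ω (p : (i : ι) × κ i) ↦ X p.1 p.2 ω).map (MeasurableEquiv.piCurry 𝓧) := by
        rw [AEMeasurable.map_map_of_aemeasurable (by fun_prop) hX]; rfl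
    _ = Measure.infinitePi fun i ↦ Measure.infinitePi fun j ↦ μ.map (X i j) := by
        rw [h.map_fun_eq_infinitePi_map₀ hX,
          Measure.infinitePi_map_piCurry fun i j ↦ μ.map (X i j)]
    _ = Measure.infinitePi fun i ↦ μ.map fun ω j ↦ X i j ω := by simp_rw [row_law]

end Independence

section Moments

variable {Ω : Type*} [MeasurableSpace Ω] {μ : Measure Ω} {X Y : Ω → ℝ} {p : ℝ≥0∞}

lemma integrable_pow_of_memLp [IsFiniteMeasure μ] {n : ℕ} (hX : MemLp X p μ) (hn : n ≤ p) :
    Integrable (X ^ n) μ := by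
  rw [← integrable_norm_iff (hX.aestronglyMeasurable.pow n)]
  simpa using (hX.mono_exponent hn).integrable_norm_pow'

lemma memLp_mul_of_indepFun (hX : MemLp X p μ) (hY : MemLp Y p μ) (hXY : IndepFun X Y μ) :
    MemLp (X * Y) p μ := by
  have hXY_meas := hX.aestronglyMeasurable.mul hY.aestronglyMeasurable
  rcases eq_or_ne p 0 with rfl | h_zero
  · exact memLp_zero_iff_aestronglyMeasurable.2 hXY_meas
  rcases eq_or_ne p ∞ with rfl | h_top
  · exact hY.mul hX
  rw [← integrable_norm_rpow_iff hXY_meas h_zero h_top]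
  have hind : IndepFun (fun ω ↦ ‖X ω‖ ^ p.toReal) (fun ω ↦ ‖Y ω‖ ^ p.toReal) μ :=
    hXY.comp (φ := fun x ↦ ‖x‖ ^ p.toReal) (ψ := fun x ↦ ‖x‖ ^ p.toReal)
      (by fun_prop) (by fun_prop)
  refine (hind.integrable_mul (hX.integrable_norm_rpow h_zero h_top)
    (hY.integrable_norm_rpow h_zero h_top)).congr (.of_forall fun ω ↦ ?_)
  simp [Real.mul_rpow]

lemma integral_pow_mul_pow_of_indepFun (hX : AEMeasurable X μ) (hY : AEMeasurable Y μ)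
    (hXY : IndepFun X Y μ) (m n : ℕ) : μ[X ^ m * Y ^ n] = moment X m μ * moment Y n μ :=
  hXY.integral_comp_mul_comp hX hY (f := (· ^ m)) (g := (· ^ n)) (by fun_prop) (by fun_prop)

lemma moment_add_of_indepFun [IsFiniteMeasure μ] {n : ℕ} (hX : MemLp X n μ) (hY : MemLp Y n μ)
    (hXY : IndepFun X Y μ) :
    moment (X + Y) n μ =
      ∑ m ∈ Finset.range (n + 1), moment X m μ * moment Y (n - m) μ * n.choose m := by
  have integrable_term (m : ℕ) (hm : m ∈ Finset.range (n + 1)) :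
      Integrable (X ^ m * Y ^ (n - m)) μ :=
    (hXY.comp (measurable_id.pow_const m) (measurable_id.pow_const (n - m))).integrable_mul
      (integrable_pow_of_memLp hX (by simpa [Nat.lt_succ_iff] using hm))
      (integrable_pow_of_memLp hY (by simp))
  calc moment (X + Y) n μ
      = ∫ ω, ∑ m ∈ Finset.range (n + 1), (X ^ m * Y ^ (n - m)) ω * n.choose m ∂μ := by
        simp [moment_def, add_pow]
    _ = ∑ m ∈ Finset.range (n + 1), μ[X ^ m * Y ^ (n - m)] * (n.choose m : ℝ) := by
        rw [integral_finsetSum _ fun m hm ↦ (integrable_term m hm).mul_const _]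
        simp_rw [integral_mul_const]
    _ = _ := by
        simp_rw [integral_pow_mul_pow_of_indepFun hX.aemeasurable hY.aemeasurable hXY]

lemma centralMoment_eq_moment (hX : μ[X] = 0) (n : ℕ) : centralMoment X n μ = moment X n μ := by
  simp [centralMoment, moment, hX]

lemma centralMoment_exponent_zero [IsProbabilityMeasure μ] : centralMoment X 0 μ = 1 := by
  simp [centralMoment]

lemma centralMoment_neg (X : Ω → ℝ) (n : ℕ) (μ : Measure Ω) :
    centralMoment (-X) n μ = (-1) ^ n * centralMoment X n μ := by
  simp only [centralMoment, Pi.neg_apply, integral_neg, ← integral_const_mul]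
  congr with ω
  simp only [Pi.pow_apply, Pi.sub_apply, Pi.neg_apply, ← mul_pow]
  ring

lemma centralMoment_add_of_indepFun [IsProbabilityMeasure μ] {n : ℕ}
    (hX : MemLp X n μ) (hY : MemLp Y n μ) (hXY : IndepFun X Y μ) :
    centralMoment (X + Y) n μ = ∑ m ∈ Finset.range (n + 1),
      centralMoment X m μ * centralMoment Y (n - m) μ * n.choose m := by
  rcases n.eq_zero_or_pos with rfl | hn
  · simp [centralMoment_exponent_zero]
  have one_le : (1 : ℝ≥0∞) ≤ n := by exact_mod_cast hn
  have sub_mean : X + Y - (fun _ ↦ μ[X + Y]) = (X - fun _ ↦ μ[X]) + (Y - fun _ ↦ μ[Y]) := by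
    rw [integral_add' (hX.integrable one_le) (hY.integrable one_le)]
    ext ω
    simp only [Pi.sub_apply, Pi.add_apply]
    ring
  calc centralMoment (X + Y) n μ
      = moment ((X - fun _ ↦ μ[X]) + (Y - fun _ ↦ μ[Y])) n μ := by rw [← sub_mean]; rfl
    _ = _ := moment_add_of_indepFun (hX.sub (memLp_const _)) (hY.sub (memLp_const _))
        (hXY.comp (φ := fun x ↦ x - ∫ ω, X ω ∂μ) (ψ := fun y ↦ y - ∫ ω, Y ω ∂μ)
          (by fun_prop) (by fun_prop))

lemma centralMoment_mul_of_indepFun (hX : AEMeasurable X μ) (hY : AEMeasurable Y μ)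
    (hXY : IndepFun X Y μ) (hX₀ : μ[X] = 0) (hY₀ : μ[Y] = 0) (n : ℕ) :
    centralMoment (X * Y) n μ = centralMoment X n μ * centralMoment Y n μ := by
  have integral_mul : μ[X * Y] = 0 := by
    rw [hXY.integral_mul_eq_mul_integral hX.aestronglyMeasurable hY.aestronglyMeasurable, hX₀,
      zero_mul]
  rw [centralMoment_eq_moment integral_mul, centralMoment_eq_moment hX₀,
    centralMoment_eq_moment hY₀, moment_def, mul_pow, integral_pow_mul_pow_of_indepFun hX hY hXY]

end Moments

section GaussianMoments

lemma moment_id_add_two_gaussianReal (v : ℝ≥0) (n : ℕ) :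
    moment id (n + 2) (gaussianReal 0 v) = (n + 1) * v * moment id n (gaussianReal 0 v) := by
  have moment_eq (k : ℕ) : moment id k (gaussianReal 0 v) =
      iteratedDeriv k (mgf id (gaussianReal 0 v)) 0 :=
    (iteratedDeriv_mgf_zero (by simp) k).symm
  have mgf_contDiff {k : ℕ} : ContDiffAt ℝ k (mgf id (gaussianReal 0 v)) 0 := by
    rw [mgf_id_gaussianReal]
    fun_prop
  have mgf_ode : deriv (mgf id (gaussianReal 0 v)) =
      (v : ℝ) • ((fun t ↦ t) * mgf id (gaussianReal 0 v)) := by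
    ext t
    have exponent_deriv : HasDerivAt (fun t : ℝ ↦ 0 * t + v * t ^ 2 / 2) (v * t) t :=
      (((hasDerivAt_id t).const_mul 0).add
        (((hasDerivAt_pow 2 t).const_mul (v : ℝ)).div_const 2)).congr_deriv (by norm_num; ring)
    rw [mgf_id_gaussianReal, exponent_deriv.exp.deriv, Pi.smul_apply, Pi.mul_apply, smul_eq_mul]
    ring
  rw [moment_eq, moment_eq, iteratedDeriv_succ', mgf_ode, iteratedDeriv_const_smul_field,
    iteratedDeriv_mul contDiffAt_fun_id mgf_contDiff,
    Finset.sum_eq_single_of_mem 1 (by simp) fun i _ hi ↦ by simp [iteratedDeriv_fun_id_zero, hi]]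
  simp only [Nat.choose_one_right, Nat.cast_add, Nat.cast_one, iteratedDeriv_fun_id_zero,
    ↓reduceIte, mul_one, add_tsub_cancel_right, smul_eq_mul]
  ring

lemma moment_two_gaussianReal (v : ℝ≥0) : moment id 2 (gaussianReal 0 v) = v := by
  simpa [moment] using moment_id_add_two_gaussianReal v 0

lemma moment_four_gaussianReal (v : ℝ≥0) : moment id 4 (gaussianReal 0 v) = 3 * v ^ 2 := by
  rw [moment_id_add_two_gaussianReal v 2, moment_two_gaussianReal, Nat.cast_ofNat]
  ring

variable {Ω : Type*} [MeasurableSpace Ω] {μ : Measure Ω} {X : Ω → ℝ} {m : ℝ} {v : ℝ≥0}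

lemma memLp_of_hasLaw_gaussianReal {p : ℝ≥0∞} (hX : HasLaw X (gaussianReal m v) μ) (hp : p ≠ ∞) :
    MemLp X p μ := by
  have : HasGaussianLaw X μ := ⟨hX.map_eq ▸ inferInstance⟩
  exact this.memLp hp

lemma centralMoment_four_of_hasLaw_gaussianReal (hX : HasLaw X (gaussianReal m v) μ) :
    centralMoment X 4 μ = 3 * v ^ 2 := by
  have hX_centred : HasLaw (fun ω ↦ X ω - m) (gaussianReal 0 v) μ := by
    simpa using gaussianReal_sub_const hX m
  calc centralMoment X 4 μ
      = ∫ ω, (X ω - m) ^ 4 ∂μ := by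
        rw [centralMoment, hX.integral_eq.trans integral_id_gaussianReal]; rfl
    _ = moment id 4 (gaussianReal 0 v) :=
        hX_centred.integral_comp (f := (· ^ 4)) (by fun_prop)
    _ = 3 * v ^ 2 := moment_four_gaussianReal v

end GaussianMoments

section FourthCumulant

variable {Ω : Type*} [MeasurableSpace Ω] {μ : Measure Ω} {X Y : Ω → ℝ}

/-- The fourth cumulant of a real random variable: the fourth-order statistic that, unlike the
fourth central moment, is additive over independent summands. It vanishes on Gaussians. -/
noncomputable def fourthCumulant (X : Ω → ℝ) (μ : Measure Ω) : ℝ :=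
  centralMoment X 4 μ - 3 * Var[X; μ] ^ 2

lemma fourthCumulant_neg (X : Ω → ℝ) (μ : Measure Ω) :
    fourthCumulant (-X) μ = fourthCumulant X μ := by
  rw [fourthCumulant, centralMoment_neg, variance_neg, Even.neg_one_pow (by decide), one_mul,
    fourthCumulant]

lemma variance_mul_of_indepFun (hX : AEMeasurable X μ) (hY : AEMeasurable Y μ)
    (hXY : IndepFun X Y μ) (hX₀ : μ[X] = 0) (hY₀ : μ[Y] = 0) :
    Var[X * Y; μ] = Var[X; μ] * Var[Y; μ] := by
  rw [← centralMoment_two_eq_variance (hX.mul hY), ← centralMoment_two_eq_variance hX,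
    ← centralMoment_two_eq_variance hY, centralMoment_mul_of_indepFun hX hY hXY hX₀ hY₀]

lemma fourthCumulant_mul_of_indepFun (hX : AEMeasurable X μ) (hY : AEMeasurable Y μ)
    (hXY : IndepFun X Y μ) (hX₀ : μ[X] = 0) (hY₀ : μ[Y] = 0) :
    fourthCumulant (X * Y) μ =
      centralMoment X 4 μ * centralMoment Y 4 μ - 3 * (Var[X; μ] * Var[Y; μ]) ^ 2 := by
  rw [fourthCumulant, centralMoment_mul_of_indepFun hX hY hXY hX₀ hY₀,
    variance_mul_of_indepFun hX hY hXY hX₀ hY₀]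

variable [IsProbabilityMeasure μ]

lemma fourthCumulant_add_of_indepFun (hX : MemLp X 4 μ) (hY : MemLp Y 4 μ)
    (hXY : IndepFun X Y μ) :
    fourthCumulant (X + Y) μ = fourthCumulant X μ + fourthCumulant Y μ := by
  have centralMoment_add : centralMoment (X + Y) 4 μ =
      centralMoment X 4 μ + 6 * Var[X; μ] * Var[Y; μ] + centralMoment Y 4 μ := by
    rw [centralMoment_add_of_indepFun (mod_cast hX) (mod_cast hY) hXY]
    simp only [Nat.reduceAdd, Finset.sum_range_succ, Finset.range_one, Finset.sum_singleton,
      centralMoment_exponent_zero, centralMoment_one,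
      centralMoment_two_eq_variance hX.aemeasurable, centralMoment_two_eq_variance hY.aemeasurable,
      Nat.choose, Nat.cast_one, Nat.cast_ofNat, Nat.reduceSub, Nat.add_one_sub_one, tsub_zero,
      tsub_self, one_mul, mul_one, zero_mul, mul_zero, add_zero]
    ring
  have two_le_four : (2 : ℝ≥0∞) ≤ 4 := by norm_num
  rw [fourthCumulant, centralMoment_add,
    hXY.variance_add (hX.mono_exponent two_le_four) (hY.mono_exponent two_le_four),
    fourthCumulant, fourthCumulant]
  ring

lemma fourthCumulant_sum_of_iIndepFun {ι : Type*} {X : ι → Ω → ℝ} (hX : ∀ i, MemLp (X i) 4 μ)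
    (h : iIndepFun X μ) (s : Finset ι) :
    fourthCumulant (∑ i ∈ s, X i) μ = ∑ i ∈ s, fourthCumulant (X i) μ := by
  classical
  induction s using Finset.induction_on with
  | empty => simp [fourthCumulant, centralMoment]
  | insert i s hi ih =>
    rw [Finset.sum_insert hi, Finset.sum_insert hi, ← ih]
    exact fourthCumulant_add_of_indepFun (hX i) (memLp_finsetSum' s fun j _ ↦ hX j)
      (h.indepFun_finsetSum_of_notMem₀ (fun j ↦ (hX j).aemeasurable) hi).symm

lemma moment_four_sum_of_iIndepFun {ι : Type*} {X : ι → Ω → ℝ} (hX : ∀ i, MemLp (X i) 4 μ)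
    (h : iIndepFun X μ) (hX₀ : ∀ i, μ[X i] = 0) (s : Finset ι) :
    moment (∑ i ∈ s, X i) 4 μ =
      ∑ i ∈ s, fourthCumulant (X i) μ + 3 * (∑ i ∈ s, Var[X i; μ]) ^ 2 := by
  have integral_sum : μ[∑ i ∈ s, X i] = 0 := by
    simp only [Finset.sum_apply]
    rw [integral_finsetSum _ fun i _ ↦ (hX i).integrable (by norm_num)]
    simp [hX₀]
  have variance_sum : Var[∑ i ∈ s, X i; μ] = ∑ i ∈ s, Var[X i; μ] :=
    IndepFun.variance_sum (fun i _ ↦ (hX i).mono_exponent (by norm_num))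
      fun i _ j _ hij ↦ h.indepFun hij
  rw [← centralMoment_eq_moment integral_sum, ← fourthCumulant_sum_of_iIndepFun hX h,
    ← variance_sum, fourthCumulant]
  ring

end FourthCumulant

section LevyArea

/-- The (unnormalised) Lévy area of the planar path made of the two segments `(w 0, w 2)` and
`(w 1, w 3)`: coordinates `0, 1` of `w` are the two half-step increments of the first Brownian
motion, coordinates `2, 3` those of the second. -/
def levyArea {R : Type*} [Mul R] [Sub R] (w : Fin 4 → R) : R := w 0 * w 3 - w 2 * w 1

variable {Ω : Type*} [MeasurableSpace Ω] {μ : Measure Ω} {ξ : Fin 4 → Ω → ℝ}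

lemma memLp_levyArea {p : ℝ≥0∞} (hξ : ∀ j, MemLp (ξ j) p μ) (h : iIndepFun ξ μ) :
    MemLp (levyArea ξ) p μ :=
  (memLp_mul_of_indepFun (hξ 0) (hξ 3) (h.indepFun (by decide))).sub
    (memLp_mul_of_indepFun (hξ 2) (hξ 1) (h.indepFun (by decide)))

lemma indepFun_mul_neg_mul (hξ : ∀ j, AEMeasurable (ξ j) μ) (h : iIndepFun ξ μ) :
    IndepFun (ξ 0 * ξ 3) (-(ξ 2 * ξ 1)) μ :=
  (h.indepFun_mul_mul₀ hξ 0 3 2 1 (by decide) (by decide) (by decide) (by decide)).comp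
    measurable_id measurable_neg

lemma integral_levyArea (hξ : ∀ j, Integrable (ξ j) μ) (h : iIndepFun ξ μ)
    (hξ₀ : ∀ j, μ[ξ j] = 0) : μ[levyArea ξ] = 0 := by
  have integral_mul {j k : Fin 4} (hjk : j ≠ k) : μ[ξ j * ξ k] = 0 := by
    rw [(h.indepFun hjk).integral_mul_eq_mul_integral (hξ j).aestronglyMeasurable
      (hξ k).aestronglyMeasurable, hξ₀, zero_mul]
  have integrable_mul {j k : Fin 4} (hjk : j ≠ k) : Integrable (ξ j * ξ k) μ :=
    (h.indepFun hjk).integrable_mul (hξ j) (hξ k)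
  rw [levyArea, integral_sub' (integrable_mul (by decide)) (integrable_mul (by decide)),
    integral_mul (by decide), integral_mul (by decide), sub_zero]

lemma variance_levyArea {v : ℝ} (hξ : ∀ j, MemLp (ξ j) 2 μ) (h : iIndepFun ξ μ)
    (hξ₀ : ∀ j, μ[ξ j] = 0) (hv : ∀ j, Var[ξ j; μ] = v) : Var[levyArea ξ; μ] = 2 * v ^ 2 := by
  have := h.isProbabilityMeasure
  have hξm (j : Fin 4) : AEMeasurable (ξ j) μ := (hξ j).aemeasurable
  have memLp_mul {j k : Fin 4} (hjk : j ≠ k) : MemLp (ξ j * ξ k) 2 μ :=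
    memLp_mul_of_indepFun (hξ j) (hξ k) (h.indepFun hjk)
  have variance_mul {j k : Fin 4} (hjk : j ≠ k) : Var[ξ j * ξ k; μ] = v ^ 2 := by
    rw [variance_mul_of_indepFun (hξm j) (hξm k) (h.indepFun hjk) (hξ₀ j) (hξ₀ k), hv, hv, sq]
  rw [levyArea, sub_eq_add_neg, IndepFun.variance_add (memLp_mul (by decide))
      (memLp_mul (by decide)).neg (indepFun_mul_neg_mul hξm h),
    variance_neg, variance_mul (by decide), variance_mul (by decide)]
  ring

lemma fourthCumulant_levyArea {v κ : ℝ} (hξ : ∀ j, MemLp (ξ j) 4 μ) (h : iIndepFun ξ μ)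
    (hξ₀ : ∀ j, μ[ξ j] = 0) (hv : ∀ j, Var[ξ j; μ] = v) (hκ : ∀ j, centralMoment (ξ j) 4 μ = κ) :
    fourthCumulant (levyArea ξ) μ = 2 * (κ ^ 2 - 3 * v ^ 4) := by
  have := h.isProbabilityMeasure
  have hξm (j : Fin 4) : AEMeasurable (ξ j) μ := (hξ j).aemeasurable
  have memLp_mul {j k : Fin 4} (hjk : j ≠ k) : MemLp (ξ j * ξ k) 4 μ :=
    memLp_mul_of_indepFun (hξ j) (hξ k) (h.indepFun hjk)
  have fourthCumulant_mul {j k : Fin 4} (hjk : j ≠ k) :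
      fourthCumulant (ξ j * ξ k) μ = κ ^ 2 - 3 * v ^ 4 := by
    rw [fourthCumulant_mul_of_indepFun (hξm j) (hξm k) (h.indepFun hjk) (hξ₀ j) (hξ₀ k),
      hκ, hκ, hv, hv]
    ring
  rw [levyArea, sub_eq_add_neg, fourthCumulant_add_of_indepFun (memLp_mul (by decide))
      (memLp_mul (by decide)).neg (indepFun_mul_neg_mul hξm h),
    fourthCumulant_neg, fourthCumulant_mul (by decide), fourthCumulant_mul (by decide)]
  ring

lemma moment_four_sum_levyArea {ι : Type*} [Fintype ι] {ξ : ι → Fin 4 → Ω → ℝ} {v κ : ℝ}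
    (hξ : ∀ i j, MemLp (ξ i j) 4 μ)
    (h : iIndepFun (fun q : ι × Fin 4 ↦ ξ q.1 q.2) μ) (hξ₀ : ∀ i j, μ[ξ i j] = 0)
    (hv : ∀ i j, Var[ξ i j; μ] = v) (hκ : ∀ i j, centralMoment (ξ i j) 4 μ = κ) :
    moment (∑ i, levyArea (ξ i)) 4 μ =
      2 * Fintype.card ι * (κ ^ 2 - 3 * v ^ 4) + 12 * Fintype.card ι ^ 2 * v ^ 4 := by
  have := h.isProbabilityMeasure
  have indep_row (i : ι) : iIndepFun (ξ i) μ :=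
    h.precomp (g := Prod.mk i) (Prod.mk_right_injective i)
  have indep_curry : iIndepFun (fun i ω j ↦ ξ i j ω) μ :=
    iIndepFun_curry (aemeasurable_pi_lambda _ fun p ↦ (hξ p.1 p.2).aemeasurable)
      (h.precomp (Equiv.sigmaEquivProd ι (Fin 4)).injective)
  have indep_levyArea : iIndepFun (fun i ↦ levyArea (ξ i)) μ :=
    indep_curry.comp (fun _ ↦ levyArea) fun _ ↦ by unfold levyArea; fun_prop
  have mean_zero (i : ι) : μ[levyArea (ξ i)] = 0 :=
    integral_levyArea (fun j ↦ (hξ i j).integrable (by norm_num)) (indep_row i) (hξ₀ i)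
  have variance_eq (i : ι) : Var[levyArea (ξ i); μ] = 2 * v ^ 2 :=
    variance_levyArea (fun j ↦ (hξ i j).mono_exponent (by norm_num)) (indep_row i) (hξ₀ i) (hv i)
  have fourthCumulant_eq (i : ι) : fourthCumulant (levyArea (ξ i)) μ = 2 * (κ ^ 2 - 3 * v ^ 4) :=
    fourthCumulant_levyArea (hξ i) (indep_row i) (hξ₀ i) (hv i) (hκ i)
  rw [moment_four_sum_of_iIndepFun (fun i ↦ memLp_levyArea (hξ i) (indep_row i)) indep_levyArea
    mean_zero]
  simp only [variance_eq, fourthCumulant_eq, Finset.sum_const, Finset.card_univ, nsmul_eq_mul]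
  ring

end LevyArea

section MilsteinPath

/-- A path `(x, y)` of the Milstein scheme for the Clark–Cameron equation, driven by the half-step
increments `w n` of the `n`-th coarse step (ordered as in `levyArea`), in which the Lévy area term
is weighted by `s`: the coarse path has `s = 0`, the fine one `s = 1`, the antithetic one
`s = -1`. -/
structure IsMilsteinPath {N : ℕ} (s : ℝ) (w : Fin N → Fin 4 → ℝ) (x y : ℕ → ℝ) : Prop where
  fst_zero : x 0 = 0
  snd_zero : y 0 = 0
  fst_succ (n : Fin N) : x (n + 1) = x n + (w n 0 + w n 1)
  snd_succ (n : Fin N) : y (n + 1) = y n + x n * (w n 2 + w n 3)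
    + 1 / 2 * ((w n 0 + w n 1) * (w n 2 + w n 3)) + s * (1 / 2 * levyArea (w n))

variable {N : ℕ} {s s' : ℝ} {w : Fin N → Fin 4 → ℝ} {x y x' y' : ℕ → ℝ}

namespace IsMilsteinPath

lemma fst_eq_fst (h : IsMilsteinPath s w x y) (h' : IsMilsteinPath s' w x' y') {n : ℕ}
    (hn : n ≤ N) : x n = x' n := by
  induction n with
  | zero => rw [h.fst_zero, h'.fst_zero]
  | succ n ih => rw [h.fst_succ ⟨n, hn⟩, h'.fst_succ ⟨n, hn⟩, ih (Nat.le_of_succ_le hn)]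

lemma snd_sub_snd (h : IsMilsteinPath s w x y) (h' : IsMilsteinPath s' w x' y') {n : ℕ}
    (hn : n ≤ N) :
    y n - y' n = (s - s') / 2 * ∑ i : Fin n, levyArea (w (Fin.castLE hn i)) := by
  induction n with
  | zero => simp [h.snd_zero, h'.snd_zero]
  | succ n ih =>
    have hn' : n ≤ N := Nat.le_of_succ_le hn
    have fst_eq : x n = x' n := h.fst_eq_fst h' hn'
    have ih := ih hn'
    have sum_succ : ∑ i : Fin (n + 1), levyArea (w (Fin.castLE hn i)) =
        ∑ i : Fin n, levyArea (w (Fin.castLE hn' i)) + levyArea (w ⟨n, hn⟩) :=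
      Fin.sum_univ_castSucc _
    rw [h.snd_succ ⟨n, hn⟩, h'.snd_succ ⟨n, hn⟩, sum_succ]
    simp only [fst_eq]
    linear_combination ih

end IsMilsteinPath

end MilsteinPath

theorem clark_cameron_antithetic_general {N : ℕ} {Ω : Type*} [MeasurableSpace Ω] {μ : Measure Ω}
    {ΔW : Fin N → Fin 4 → Ω → ℝ} {v κ : ℝ}
    (hmem : ∀ n j, MemLp (ΔW n j) 4 μ)
    (hindep : iIndepFun (fun q : Fin N × Fin 4 ↦ ΔW q.1 q.2) μ) (hmean : ∀ n j, μ[ΔW n j] = 0)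
    (hvar : ∀ n j, Var[ΔW n j; μ] = v) (hfourth : ∀ n j, centralMoment (ΔW n j) 4 μ = κ)
    {Xc₁ Xc₂ Xf₁ Xf₂ Xa₁ Xa₂ : ℕ → Ω → ℝ}
    (hc : ∀ ω, IsMilsteinPath 0 (fun n j ↦ ΔW n j ω) (Xc₁ · ω) (Xc₂ · ω))
    (hf : ∀ ω, IsMilsteinPath 1 (fun n j ↦ ΔW n j ω) (Xf₁ · ω) (Xf₂ · ω))
    (ha : ∀ ω, IsMilsteinPath (-1) (fun n j ↦ ΔW n j ω) (Xa₁ · ω) (Xa₂ · ω)) :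
    (∀ n ≤ N, ∀ ω, Xf₁ n ω = Xa₁ n ω ∧ Xa₁ n ω = Xc₁ n ω) ∧
    (∀ n ≤ N, ∀ ω, 1 / 2 * (Xf₂ n ω + Xa₂ n ω) = Xc₂ n ω) ∧
    ∫ ω, (Xf₂ N ω - Xa₂ N ω) ^ 4 ∂μ = 2 * N * (κ ^ 2 - 3 * v ^ 4) + 12 * N ^ 2 * v ^ 4 := by
  refine ⟨fun n hn ω ↦ ⟨(hf ω).fst_eq_fst (ha ω) hn, (ha ω).fst_eq_fst (hc ω) hn⟩,
    fun n hn ω ↦ ?_, ?_⟩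
  · linear_combination ((hf ω).snd_sub_snd (hc ω) hn + (ha ω).snd_sub_snd (hc ω) hn) / 2
  · have sub_eq_sum : Xf₂ N - Xa₂ N = ∑ n, levyArea (ΔW n) := by
      ext ω
      simpa [levyArea] using (hf ω).snd_sub_snd (ha ω) le_rfl
    change moment (Xf₂ N - Xa₂ N) 4 μ = _
    rw [sub_eq_sum, moment_four_sum_levyArea hmem hindep hmean hvar hfourth,
      Fintype.card_fin]

/-- the Clark–Cameron antithetic example.
With `Δt = T/N` and `a n, b n, c n, d n` (`n < N`) 4N independent centred Gaussians of
variance `Δt/2`, and the coarse / fine / antithetic paths defined from `X₁ = X₂ = 0` by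
the recursions of the Lévy-area-free and two-half-step Milstein schemes for the
Clark–Cameron SDE `dx₁ = dw₁, dx₂ = x₁ dw₂`, one has:
(1) `Xf₁ n = Xa₁ n = Xc₁ n` for all `n ≤ N`;
(2) `½(Xf₂ n + Xa₂ n) = Xc₂ n` for all `n ≤ N`;
(3) `E[(Xf₂ N − Xa₂ N)⁴] = (3/4) T (T + Δt) Δt²`. -/
theorem clark_cameron_antithetic
    (T : ℝ) (hT : 0 < T) (N : ℕ) (hN : 0 < N)
    {Ω : Type*} [MeasurableSpace Ω] (μ : Measure Ω) [IsProbabilityMeasure μ]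
    (a b c d : Fin N → Ω → ℝ)
    (hmeas : ∀ q : Fin N × Fin 4, Measurable (![a q.1, b q.1, c q.1, d q.1] q.2))
    (hlaw : ∀ q : Fin N × Fin 4,
      μ.map (![a q.1, b q.1, c q.1, d q.1] q.2) = gaussianReal 0 (Real.toNNReal (T / N / 2)))
    (hindep : iIndepFun
      (fun q : Fin N × Fin 4 => ![a q.1, b q.1, c q.1, d q.1] q.2) μ)
    (Xc₁ Xc₂ Xf₁ Xf₂ Xa₁ Xa₂ : ℕ → Ω → ℝ)
    (hc₀ : ∀ ω, Xc₁ 0 ω = 0 ∧ Xc₂ 0 ω = 0)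
    (hf₀ : ∀ ω, Xf₁ 0 ω = 0 ∧ Xf₂ 0 ω = 0)
    (ha₀ : ∀ ω, Xa₁ 0 ω = 0 ∧ Xa₂ 0 ω = 0)
    (hc₁ : ∀ (n : Fin N) ω, Xc₁ (n + 1) ω = Xc₁ n ω + (a n ω + b n ω))
    (hc₂ : ∀ (n : Fin N) ω, Xc₂ (n + 1) ω
      = Xc₂ n ω + Xc₁ n ω * (c n ω + d n ω)
        + 1 / 2 * ((a n ω + b n ω) * (c n ω + d n ω)))
    (hf₁ : ∀ (n : Fin N) ω, Xf₁ (n + 1) ω = Xf₁ n ω + (a n ω + b n ω))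
    (hf₂ : ∀ (n : Fin N) ω, Xf₂ (n + 1) ω
      = Xf₂ n ω + Xf₁ n ω * (c n ω + d n ω)
        + 1 / 2 * ((a n ω + b n ω) * (c n ω + d n ω))
        + 1 / 2 * (a n ω * d n ω - c n ω * b n ω))
    (ha₁ : ∀ (n : Fin N) ω, Xa₁ (n + 1) ω = Xa₁ n ω + (a n ω + b n ω))
    (ha₂ : ∀ (n : Fin N) ω, Xa₂ (n + 1) ω
      = Xa₂ n ω + Xa₁ n ω * (c n ω + d n ω)
        + 1 / 2 * ((a n ω + b n ω) * (c n ω + d n ω))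
        - 1 / 2 * (a n ω * d n ω - c n ω * b n ω)) :
    (∀ n ≤ N, ∀ ω, Xf₁ n ω = Xa₁ n ω ∧ Xa₁ n ω = Xc₁ n ω) ∧
    (∀ n ≤ N, ∀ ω, 1 / 2 * (Xf₂ n ω + Xa₂ n ω) = Xc₂ n ω) ∧
    (∫ ω, (Xf₂ N ω - Xa₂ N ω) ^ 4 ∂μ)
      = 3 / 4 * T * (T + T / N) * (T / N) ^ 2 := by
  have hX (n : Fin N) (j : Fin 4) :
      HasLaw (![a n, b n, c n, d n] j) (gaussianReal 0 (T / N / 2).toNNReal) μ :=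
    ⟨(hmeas (n, j)).aemeasurable, hlaw (n, j)⟩
  have coe_variance : ((T / N / 2).toNNReal : ℝ) = T / N / 2 := Real.coe_toNNReal _ (by positivity)
  obtain ⟨fst_eq, snd_avg, fourth_moment⟩ := clark_cameron_antithetic_general
    (ΔW := fun n ↦ ![a n, b n, c n, d n])
    (fun n j ↦ memLp_of_hasLaw_gaussianReal (hX n j) (by simp)) hindep
    (fun n j ↦ (hX n j).integral_eq.trans integral_id_gaussianReal)
    (fun n j ↦ (hX n j).variance_eq.trans variance_id_gaussianReal)
    (fun n j ↦ centralMoment_four_of_hasLaw_gaussianReal (hX n j))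
    (fun ω ↦ ⟨(hc₀ ω).1, (hc₀ ω).2, (hc₁ · ω), fun n ↦ by simpa [levyArea] using hc₂ n ω⟩)
    (fun ω ↦ ⟨(hf₀ ω).1, (hf₀ ω).2, (hf₁ · ω), fun n ↦ by simpa [levyArea] using hf₂ n ω⟩)
    (fun ω ↦ ⟨(ha₀ ω).1, (ha₀ ω).2, (ha₁ · ω),
      fun n ↦ by simpa [levyArea, ← sub_eq_add_neg] using ha₂ n ω⟩)
  refine ⟨fst_eq, snd_avg, fourth_moment.trans ?_⟩
  rw [coe_variance]
  field_simp
  ring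
end

section
/- Let w and z be independent random elements with values in measurable spaces E and F respectively, and let P : E × F → ℝ be measurable with E[P(w,z)²] < ∞. For integers M, S ≥ 1, let w^1,…,w^M be i.i.d. copies of w and let (z^{m,i})_{1 ≤ m ≤ M, 1 ≤ i ≤ S} be i.i.d. copies of z, with the whole family (w^m) ∪ (z^{m,i}) independent. Define Y_{M,S} = M^{−1} Σ_{m=1}^{M} ( S^{−1} Σ_{i=1}^{S} P(w^m, z^{m,i}) ). Then Y_{M,S} is an unbiased estimator of E[P(w,z)], i.e. E[Y_{M,S}] = E[P(w,z)], and its variance is Var[Y_{M,S}] = M^{−1}·Var_w[ E_z[P(w,z) | w] ] + (MS)^{−1}·E_w[ Var_z[P(w,z) | w] ]. -/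
open MeasureTheory ProbabilityTheory

/-!
Grouping each path sample with its own final-step samples turns the estimator into an average of
i.i.d. copies of one block, which is itself an average over final steps along a fixed path. An
average of `n` i.i.d. copies keeps the mean and divides the variance by `n`. Applied across blocks,
this gives the factor `M⁻¹`. Within a block, the law of total variance separates the two
contributions: conditionally on the path, averaging leaves the mean alone and divides the variance
by `S`.
-/

section TotalVariance

variable {α β : Type*} [MeasurableSpace α] [MeasurableSpace β] {μ : Measure α} {ν : Measure β}
  {f : α × β → ℝ}

lemma ae_memLp_prodMk_left {G : Type*} [NormedAddCommGroup G] [SFinite μ] [SFinite ν]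
    {g : α × β → G} {q : ENNReal} (hq_zero : q ≠ 0) (hq_top : q ≠ ⊤) (hg : MemLp g q (μ.prod ν)) :
    ∀ᵐ x ∂μ, MemLp (fun y ↦ g (x, y)) q ν := by
  have hpow := (integrable_norm_rpow_iff hg.aestronglyMeasurable hq_zero hq_top).2 hg
  filter_upwards [hg.aestronglyMeasurable.prodMk_left, hpow.prod_right_ae] with x hmeas hx
  exact (integrable_norm_rpow_iff hmeas hq_zero hq_top).1 hx

lemma ae_variance_prodMk_left_eq_sub [SFinite μ] [IsProbabilityMeasure ν]
    (hf : MemLp f 2 (μ.prod ν)) :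
    ∀ᵐ x ∂μ, Var[fun y ↦ f (x, y); ν]
      = (∫ y, f (x, y) ^ 2 ∂ν) - (∫ y, f (x, y) ∂ν) ^ 2 := by
  filter_upwards [ae_memLp_prodMk_left two_ne_zero ENNReal.ofNat_ne_top hf] with x hx
  exact variance_eq_sub hx

lemma memLp_two_integral_prodMk_left [SFinite μ] [IsProbabilityMeasure ν]
    (hf : MemLp f 2 (μ.prod ν)) : MemLp (fun x ↦ ∫ y, f (x, y) ∂ν) 2 μ := by
  have hmeas := hf.aestronglyMeasurable.integral_prod_right'
  refine (memLp_two_iff_integrable_sq hmeas).2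
    (hf.integrable_sq.integral_prod_left.mono' (hmeas.pow 2) ?_)
  filter_upwards [ae_variance_prodMk_left_eq_sub hf] with x hx
  have hvar : 0 ≤ Var[fun y ↦ f (x, y); ν] := variance_nonneg _ _
  rw [Real.norm_of_nonneg (sq_nonneg _)]
  linarith

lemma variance_prod_eq_variance_integral_add_integral_variance [IsProbabilityMeasure μ]
    [IsProbabilityMeasure ν] (hf : MemLp f 2 (μ.prod ν)) :
    Var[f; μ.prod ν]
      = Var[fun x ↦ ∫ y, f (x, y) ∂ν; μ] + ∫ x, Var[fun y ↦ f (x, y); ν] ∂μ := by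
  have hg := memLp_two_integral_prodMk_left hf
  have hwithin : ∫ x, Var[fun y ↦ f (x, y); ν] ∂μ
      = (∫ p, f p ^ 2 ∂μ.prod ν) - ∫ x, (∫ y, f (x, y) ∂ν) ^ 2 ∂μ := by
    rw [integral_congr_ae (ae_variance_prodMk_left_eq_sub hf),
      integral_sub hf.integrable_sq.integral_prod_left hg.integrable_sq,
      integral_prod _ hf.integrable_sq]
  rw [hwithin, variance_eq_sub hf, variance_eq_sub hg, integral_prod _ (hf.integrable one_le_two)]
  simp only [Pi.pow_apply]
  ring

end TotalVariance

section SampleMean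

variable {ι α : Type*} [Fintype ι]

/-- The empirical average of `f` over a finite sample `x`, the estimator of `∫ f` when the entries
of `x` are drawn independently. It is `0` for an empty sample. -/
noncomputable def sampleMean (f : α → ℝ) (x : ι → α) : ℝ :=
  (Fintype.card ι : ℝ)⁻¹ * ∑ i, f (x i)

variable [MeasurableSpace α] {ν : Measure α} [IsProbabilityMeasure ν] {f : α → ℝ}

lemma integral_sampleMean [Nonempty ι] (hf : Integrable f ν) :
    ∫ x, sampleMean f x ∂Measure.pi (fun _ : ι ↦ ν) = ∫ a, f a ∂ν := by
  simp only [sampleMean]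
  rw [integral_const_mul, integral_finsetSum _ fun i _ ↦ integrable_comp_eval hf]
  simp_rw [integral_comp_eval (μ := fun _ : ι ↦ ν) hf.aestronglyMeasurable]
  simp

lemma variance_sampleMean (hf : MemLp f 2 ν) :
    Var[sampleMean f; Measure.pi fun _ : ι ↦ ν] = (Fintype.card ι : ℝ)⁻¹ * Var[f; ν] := by
  have hsum : Var[fun x ↦ ∑ i, f (x i); Measure.pi fun _ : ι ↦ ν]
      = Fintype.card ι * Var[f; ν] := by
    simpa [Finset.sum_fn] using variance_sum_pi (μ := fun _ : ι ↦ ν) fun _ ↦ hf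
  unfold sampleMean
  rw [variance_const_mul, hsum]
  rcases eq_or_ne (Fintype.card ι : ℝ) 0 with hcard | hcard
  · simp [hcard]
  · field_simp

end SampleMean

section Splitting

variable {ι κ E F : Type*} [Fintype ι] [Fintype κ]

/-- The path-splitting estimator `Y_{M,S}`, with the paths indexed by `ι` (so `M = card ι`) and the
final steps along each path indexed by `κ` (so `S = card κ`). -/
noncomputable def splittingEstimator (P : E → F → ℝ) : (ι → E) × (ι × κ → F) → ℝ := fun ω ↦
  (Fintype.card ι : ℝ)⁻¹ * ∑ m, (Fintype.card κ : ℝ)⁻¹ * ∑ i, P (ω.1 m) (ω.2 (m, i))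

/-- The contribution of one path `p.1` to the splitting estimator: the average of the payoff `P`
over the final steps `p.2` sampled along that path. -/
noncomputable def blockMean (P : E → F → ℝ) (p : E × (κ → F)) : ℝ :=
  sampleMean (P p.1) p.2

/-- Attaches to each path the final steps sampled along it, so that `ι`-many paths with
`κ`-many final steps each become an `ι`-indexed family of blocks. -/
def groupByPath (ι κ E F : Type*) [MeasurableSpace E] [MeasurableSpace F] :
    (ι → E) × (ι × κ → F) ≃ᵐ (ι → E × (κ → F)) :=
  ((MeasurableEquiv.refl _).prodCongr (MeasurableEquiv.curry ι κ F)).trans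
    (MeasurableEquiv.arrowProdEquivProdArrow E (κ → F) ι).symm

variable [MeasurableSpace E] [MeasurableSpace F] {P : E → F → ℝ}

lemma splittingEstimator_eq_sampleMean_blockMean :
    splittingEstimator P = sampleMean (blockMean P) ∘ groupByPath ι κ E F := rfl

variable {μ : Measure E} {ν : Measure F} [IsProbabilityMeasure ν]

lemma measurePreserving_groupByPath [SigmaFinite μ] :
    MeasurePreserving (groupByPath ι κ E F)
      ((Measure.pi fun _ ↦ μ).prod (Measure.pi fun _ ↦ ν))
      (Measure.pi fun _ ↦ μ.prod (Measure.pi fun _ ↦ ν)) := by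
  have hcurry : MeasurePreserving (MeasurableEquiv.curry ι κ F)
      (Measure.pi fun _ ↦ ν) (Measure.pi fun _ ↦ Measure.pi fun _ ↦ ν) :=
    ⟨by fun_prop, by
      simpa only [Measure.infinitePi_eq_pi] using
        Measure.infinitePi_map_curry (ι := ι) (κ := κ) fun _ _ ↦ ν⟩
  have hzip := (measurePreserving_arrowProdEquivProdArrow E (κ → F) ι (fun _ ↦ μ)
    fun _ ↦ Measure.pi fun _ ↦ ν).symm
  exact hzip.comp ((MeasurePreserving.id _).prod hcurry)

lemma memLp_blockMean [SFinite μ] {q : ENNReal}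
    (hP : MemLp (fun p : E × F ↦ P p.1 p.2) q (μ.prod ν)) :
    MemLp (blockMean P) q (μ.prod (Measure.pi fun _ : κ ↦ ν)) := by
  have hsample (i : κ) : MeasurePreserving (Prod.map id (Function.eval i))
      (μ.prod (Measure.pi fun _ : κ ↦ ν)) (μ.prod ν) :=
    (MeasurePreserving.id μ).prod (measurePreserving_eval _ i)
  exact (memLp_finsetSum _ fun i _ ↦ hP.comp_measurePreserving (hsample i)).const_mul _

lemma integrable_blockMean [SFinite μ]
    (hP : Integrable (fun p : E × F ↦ P p.1 p.2) (μ.prod ν)) :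
    Integrable (blockMean P) (μ.prod (Measure.pi fun _ : κ ↦ ν)) :=
  memLp_one_iff_integrable.1 (memLp_blockMean (memLp_one_iff_integrable.2 hP))

lemma ae_integral_blockMean [SFinite μ] [Nonempty κ]
    (hP : Integrable (fun p : E × F ↦ P p.1 p.2) (μ.prod ν)) :
    ∀ᵐ w ∂μ, ∫ z, blockMean P (w, z) ∂Measure.pi (fun _ : κ ↦ ν) = ∫ z, P w z ∂ν := by
  filter_upwards [hP.prod_right_ae] with w hw
  exact integral_sampleMean hw

lemma integral_blockMean [SFinite μ] [Nonempty κ]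
    (hP : Integrable (fun p : E × F ↦ P p.1 p.2) (μ.prod ν)) :
    ∫ p, blockMean P p ∂μ.prod (Measure.pi fun _ : κ ↦ ν) = ∫ p, P p.1 p.2 ∂μ.prod ν := by
  rw [integral_prod _ (integrable_blockMean hP), integral_prod _ hP]
  exact integral_congr_ae (ae_integral_blockMean hP)

variable [IsProbabilityMeasure μ]

lemma variance_blockMean [Nonempty κ] (hP : MemLp (fun p : E × F ↦ P p.1 p.2) 2 (μ.prod ν)) :
    Var[blockMean P; μ.prod (Measure.pi fun _ : κ ↦ ν)]
      = Var[fun w ↦ ∫ z, P w z ∂ν; μ] + (Fintype.card κ : ℝ)⁻¹ * ∫ w, Var[P w; ν] ∂μ := by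
  have hwithin : ∀ᵐ w ∂μ, Var[fun z ↦ blockMean P (w, z); Measure.pi fun _ : κ ↦ ν]
      = (Fintype.card κ : ℝ)⁻¹ * Var[P w; ν] := by
    filter_upwards [ae_memLp_prodMk_left two_ne_zero ENNReal.ofNat_ne_top hP] with w hw
    exact variance_sampleMean (f := P w) hw
  rw [variance_prod_eq_variance_integral_add_integral_variance (memLp_blockMean hP),
    variance_congr (ae_integral_blockMean (hP.integrable one_le_two)),
    integral_congr_ae hwithin, integral_const_mul]

lemma integral_splittingEstimator [Nonempty ι] [Nonempty κ]
    (hP : Integrable (fun p : E × F ↦ P p.1 p.2) (μ.prod ν)) :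
    ∫ ω, splittingEstimator P ω
        ∂(Measure.pi fun _ : ι ↦ μ).prod (Measure.pi fun _ : ι × κ ↦ ν)
      = ∫ p, P p.1 p.2 ∂μ.prod ν := by
  rw [← integral_blockMean (κ := κ) hP, ← integral_sampleMean (ι := ι) (integrable_blockMean hP),
    splittingEstimator_eq_sampleMean_blockMean]
  exact measurePreserving_groupByPath.integral_comp' _

lemma variance_splittingEstimator [Nonempty κ]
    (hP : MemLp (fun p : E × F ↦ P p.1 p.2) 2 (μ.prod ν)) :
    Var[splittingEstimator P;
        (Measure.pi fun _ : ι ↦ μ).prod (Measure.pi fun _ : ι × κ ↦ ν)]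
      = (Fintype.card ι : ℝ)⁻¹ * Var[fun w ↦ ∫ z, P w z ∂ν; μ]
        + ((Fintype.card ι : ℝ) * Fintype.card κ)⁻¹ * ∫ w, Var[P w; ν] ∂μ := by
  calc Var[splittingEstimator P; (Measure.pi fun _ : ι ↦ μ).prod (Measure.pi fun _ : ι × κ ↦ ν)]
    _ = Var[sampleMean (blockMean P);
          Measure.pi fun _ : ι ↦ μ.prod (Measure.pi fun _ : κ ↦ ν)] := by
      rw [splittingEstimator_eq_sampleMean_blockMean, ← variance_map_equiv,
        measurePreserving_groupByPath.map_eq]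
    _ = (Fintype.card ι : ℝ)⁻¹ * Var[blockMean P; μ.prod (Measure.pi fun _ : κ ↦ ν)] :=
      variance_sampleMean (memLp_blockMean hP)
    _ = _ := by
      rw [variance_blockMean hP, mul_inv]
      ring

end Splitting

theorem splitting_estimator_mean_variance_general {ι κ E F : Type*}
    [Fintype ι] [Nonempty ι] [Fintype κ] [Nonempty κ] [MeasurableSpace E] [MeasurableSpace F]
    (νw : Measure E) (νz : Measure F) [IsProbabilityMeasure νw] [IsProbabilityMeasure νz]
    (P : E → F → ℝ) (hP2 : MemLp (fun p : E × F ↦ P p.1 p.2) 2 (νw.prod νz)) :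
    (∫ ω, splittingEstimator P ω
        ∂(Measure.pi fun _ : ι ↦ νw).prod (Measure.pi fun _ : ι × κ ↦ νz))
      = (∫ p : E × F, P p.1 p.2 ∂νw.prod νz) ∧
    Var[splittingEstimator P;
        (Measure.pi fun _ : ι ↦ νw).prod (Measure.pi fun _ : ι × κ ↦ νz)]
      = (Fintype.card ι : ℝ)⁻¹ * Var[fun w ↦ ∫ z, P w z ∂νz; νw]
        + ((Fintype.card ι : ℝ) * Fintype.card κ)⁻¹
            * ∫ w, ((∫ z, P w z ^ 2 ∂νz) - (∫ z, P w z ∂νz) ^ 2) ∂νw := by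
  refine ⟨integral_splittingEstimator (hP2.integrable one_le_two), ?_⟩
  rw [variance_splittingEstimator hP2, integral_congr_ae (ae_variance_prodMk_left_eq_sub hP2)]

/-- mean and variance of the path-splitting estimator.
With `w, z` independent random elements of laws `νw, νz`, `P` measurable and square
integrable with respect to `νw ⊗ νz`, and i.i.d. samples `w^1,…,w^M` and
`(z^{m,i})_{m≤M, i≤S}` (the whole family independent — realised here on the canonical
product space `(Fin M → E) × (Fin M × Fin S → F)` with the product measure), the estimator
`Y_{M,S} = M⁻¹ ∑_m (S⁻¹ ∑_i P(w^m, z^{m,i}))` is unbiased for `E[P(w,z)]` and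
`Var[Y_{M,S}] = M⁻¹ Var_w[E_z[P(w,z)|w]] + (MS)⁻¹ E_w[Var_z[P(w,z)|w]]`. -/
theorem splitting_estimator_mean_variance
    {E F : Type*} [MeasurableSpace E] [MeasurableSpace F]
    (νw : Measure E) (νz : Measure F)
    [IsProbabilityMeasure νw] [IsProbabilityMeasure νz]
    (P : E → F → ℝ) (hPmeas : Measurable fun p : E × F => P p.1 p.2)
    (hP2 : MemLp (fun p : E × F => P p.1 p.2) 2 (νw.prod νz))
    (M S : ℕ) (hM : 1 ≤ M) (hS : 1 ≤ S) :
    (∫ ω : (Fin M → E) × (Fin M × Fin S → F),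
        (M : ℝ)⁻¹ * ∑ m : Fin M, (S : ℝ)⁻¹ * ∑ i : Fin S, P (ω.1 m) (ω.2 (m, i))
        ∂((Measure.pi fun _ : Fin M => νw).prod (Measure.pi fun _ : Fin M × Fin S => νz)))
      = (∫ p : E × F, P p.1 p.2 ∂(νw.prod νz)) ∧
    variance (fun ω : (Fin M → E) × (Fin M × Fin S → F) =>
        (M : ℝ)⁻¹ * ∑ m : Fin M, (S : ℝ)⁻¹ * ∑ i : Fin S, P (ω.1 m) (ω.2 (m, i)))
        ((Measure.pi fun _ : Fin M => νw).prod (Measure.pi fun _ : Fin M × Fin S => νz))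
      = (M : ℝ)⁻¹ * variance (fun w => ∫ z, P w z ∂νz) νw
        + ((M : ℝ) * (S : ℝ))⁻¹
            * ∫ w, ((∫ z, P w z ^ 2 ∂νz) - (∫ z, P w z ∂νz) ^ 2) ∂νw := by
  have : Nonempty (Fin M) := Fin.pos_iff_nonempty.1 hM
  have : Nonempty (Fin S) := Fin.pos_iff_nonempty.1 hS
  have h := splitting_estimator_mean_variance_general (ι := Fin M) (κ := Fin S) νw νz P hP2
  unfold splittingEstimator at h
  simpa only [Fintype.card_fin] using h
end

section
/- Let ρ ∈ [0,1], let h, k > 0, and let Z be a standard normal random variable. For p ∈ ℓ²(ℤ, ℝ) define the random update (T_Z p)_j = p_j − ( sqrt(ρk)·Z/(2h) )·(p_{j+1} − p_{j−1}) + ( ((1−ρ)k + ρk Z²)/(2h²) )·(p_{j+1} − 2p_j + p_{j−1}). Then the scheme is mean-square stable, i.e. E[ ‖T_Z p‖²_{ℓ²(ℤ)} ] ≤ ‖p‖²_{ℓ²(ℤ)} for every p ∈ ℓ²(ℤ, ℝ), if and only if k/h² ≤ (1 + 2ρ²)^{−1}. -/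
open MeasureTheory ProbabilityTheory

/-!
Write `D p` and `L p` for the first and second central differences of `p`. Summation by parts gives
`⟨p, D p⟩ = ⟨D p, L p⟩ = 0` and `⟨p, L p⟩ = -(‖D p‖² + ‖L p‖²) / 4`, so `‖p - x D p + y L p‖²` is a
combination of `‖p‖²`, `‖D p‖²` and `‖L p‖²` only. Averaging over a normalised noise with fourth
moment `κ` gives
`E ‖T_Z p‖² = ‖p‖² + (r / 4) ((r (1 + (κ - 1) ρ²) - 1) ‖L p‖² - (1 - ρ) ‖D p‖²)` with `r = k / h²`.
Stability is therefore equivalent to `r (1 + (κ - 1) ρ²) ≤ 1`: near the highest grid frequency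
`p_j = (-1)^j`, which `p_j = s^|j|` approaches as `s → -1`, the quotient `‖D p‖² / ‖L p‖²` tends
to zero.
-/

section Sequences

lemma memℓp_comp_injective {ι ι' E : Type*} [NormedAddCommGroup E] {q : ENNReal} {f : ι' → E}
    (hf : Memℓp f q) {e : ι → ι'} (he : Function.Injective e) : Memℓp (fun i => f (e i)) q := by
  rcases q.trichotomy with rfl | rfl | hq
  · exact memℓp_zero (hf.finite_dsupport.preimage he.injOn)
  · exact memℓp_infty (hf.bddAbove.mono (Set.range_comp_subset_range e fun i => ‖f i‖))
  · exact memℓp_gen ((hf.summable hq).comp_injective he)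

lemma memℓp_two_iff_summable_sq {ι : Type*} {f : ι → ℝ} :
    Memℓp f 2 ↔ Summable fun i => f i ^ 2 := by
  simp [memℓp_gen_iff]

lemma hasSum_add_one_sub {G : Type*} [AddCommGroup G] [TopologicalSpace G] [IsTopologicalAddGroup G]
    {f : ℤ → G} (hf : Summable f) : HasSum (fun j => f (j + 1) - f j) 0 := by
  have hshift : HasSum (fun j => f (j + 1)) (∑' j, f j) :=
    (Equiv.addRight (1 : ℤ)).hasSum_iff.2 hf.hasSum
  simpa only [sub_self] using hshift.sub hf.hasSum

lemma summable_pow_natAbs {K : Type*} [NormedDivisionRing K] [CompleteSpace K] {s : K}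
    (hs : ‖s‖ < 1) :
    Summable fun j : ℤ => s ^ j.natAbs := by
  rw [summable_int_iff_summable_nat_and_neg]
  simpa using summable_geometric_of_norm_lt_one hs

end Sequences

section Differences

/-- The unnormalised first central difference on the grid `ℤ`, i.e. `2h` times the discretisation
of `∂/∂x`. -/
def centralDiff (p : ℤ → ℝ) (j : ℤ) : ℝ := p (j + 1) - p (j - 1)

/-- The unnormalised second central difference on the grid `ℤ`, i.e. `h²` times the discretisation
of `∂²/∂x²`. -/
def secondDiff (p : ℤ → ℝ) (j : ℤ) : ℝ := p (j + 1) - 2 * p j + p (j - 1)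

variable {p : ℤ → ℝ}

lemma memℓp_centralDiff {q : ENNReal} (hp : Memℓp p q) : Memℓp (centralDiff p) q :=
  (memℓp_comp_injective hp (add_left_injective 1)).sub
    (memℓp_comp_injective hp (sub_left_injective (b := 1)))

lemma memℓp_secondDiff {q : ENNReal} (hp : Memℓp p q) : Memℓp (secondDiff p) q :=
  ((memℓp_comp_injective hp (add_left_injective 1)).sub (hp.const_mul 2)).add
    (memℓp_comp_injective hp (sub_left_injective (b := 1)))

lemma hasSum_sq_sub_centralDiff_add_secondDiff (hp : Memℓp p 2) (x y : ℝ) :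
    HasSum (fun j => (p j - x * centralDiff p j + y * secondDiff p j) ^ 2)
      (∑' j, p j ^ 2 + (x ^ 2 - y / 2) * ∑' j, centralDiff p j ^ 2
        + (y ^ 2 - y / 2) * ∑' j, secondDiff p j ^ 2) := by
  have hpred : Memℓp (fun j => p (j - 1)) 2 :=
    memℓp_comp_injective hp (sub_left_injective (b := 1))
  have hP := memℓp_two_iff_summable_sq.1 hp
  have hD := memℓp_two_iff_summable_sq.1 (memℓp_centralDiff hp)
  have hL := memℓp_two_iff_summable_sq.1 (memℓp_secondDiff hp)
  -- The cross terms of the square are the increments of this flux, up to multiples of the squares.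
  let flux (j : ℤ) : ℝ := x * ((p j - p (j - 1)) ^ 2 - p j ^ 2 - p (j - 1) ^ 2)
    + y * (p j ^ 2 - p (j - 1) ^ 2) - 2 * x * y * (p j - p (j - 1)) ^ 2
  have hflux : Summable flux := by
    have hpred_sq := memℓp_two_iff_summable_sq.1 hpred
    have hdiff_sq := memℓp_two_iff_summable_sq.1 (hp.sub hpred)
    exact ((((hdiff_sq.sub hP).sub hpred_sq).mul_left x).add ((hP.sub hpred_sq).mul_left y)).sub
      (hdiff_sq.mul_left (2 * x * y))
  have hsum := ((hP.hasSum.add (hD.hasSum.mul_left (x ^ 2 - y / 2))).add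
    (hL.hasSum.mul_left (y ^ 2 - y / 2))).add (hasSum_add_one_sub hflux)
  rw [add_zero] at hsum
  refine hsum.congr_fun fun j => ?_
  simp only [flux, centralDiff, secondDiff, add_sub_cancel_right]
  ring

end Differences

section HighFrequency

lemma sq_mul_centralDiff_pow_natAbs_le (s : ℝ) (j : ℤ) :
    (1 - s) ^ 2 * centralDiff (fun i => s ^ i.natAbs) j ^ 2
      ≤ (1 + s) ^ 2 * secondDiff (fun i => s ^ i.natAbs) j ^ 2 := by
  rcases lt_trichotomy j 0 with hj | rfl | hj
  · obtain ⟨m, rfl⟩ : ∃ m : ℕ, j = -(m + 1) := ⟨(-j - 1).toNat, by omega⟩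
    have hleft : (-(m + 1 : ℤ) - 1).natAbs = m + 2 := by omega
    have hmid : (-(m + 1 : ℤ)).natAbs = m + 1 := by omega
    have hright : (-(m + 1 : ℤ) + 1).natAbs = m := by omega
    rw [centralDiff, secondDiff, hleft, hmid, hright]
    exact le_of_eq (by ring)
  · simp only [centralDiff, zero_add, zero_sub, Int.natAbs_neg, sub_self, ne_eq,
      OfNat.ofNat_ne_zero, not_false_eq_true, zero_pow, mul_zero]
    positivity
  · obtain ⟨m, rfl⟩ : ∃ m : ℕ, j = m + 1 := ⟨(j - 1).toNat, by omega⟩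
    have hleft : (m + 1 - 1 : ℤ).natAbs = m := by omega
    have hmid : (m + 1 : ℤ).natAbs = m + 1 := by omega
    have hright : (m + 1 + 1 : ℤ).natAbs = m + 2 := by omega
    rw [centralDiff, secondDiff, hleft, hmid, hright]
    exact le_of_eq (by ring)

lemma exists_memℓp_tsum_sq_centralDiff_le {ε : ℝ} (hε : 0 < ε) :
    ∃ p : ℤ → ℝ, Memℓp p 2 ∧ 0 < ∑' j, secondDiff p j ^ 2 ∧
      ∑' j, centralDiff p j ^ 2 ≤ ε * ∑' j, secondDiff p j ^ 2 := by
  obtain ⟨s, hs_lower, hs_upper, hsε⟩ : ∃ s : ℝ, -1 < s ∧ s < 0 ∧ (1 + s) ^ 2 ≤ ε := by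
    refine ⟨-(1 + ε)⁻¹, neg_lt_neg (inv_lt_one_of_one_lt₀ (by linarith)),
      neg_neg_of_pos (by positivity), ?_⟩
    rw [show 1 + -(1 + ε)⁻¹ = ε / (1 + ε) by field_simp; ring, div_pow, div_le_iff₀ (by positivity)]
    nlinarith [pow_pos hε 2, pow_pos hε 3]
  let p (j : ℤ) : ℝ := s ^ j.natAbs
  have hp : Memℓp p 2 := by
    have hs_norm : ‖s‖ < 1 := abs_lt.2 ⟨hs_lower, hs_upper.trans one_pos⟩
    refine memℓp_two_iff_summable_sq.2 ?_
    simp only [p, pow_right_comm s _ 2]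
    refine summable_pow_natAbs ?_
    rw [norm_pow]
    exact pow_lt_one₀ (norm_nonneg s) hs_norm two_ne_zero
  have hD := memℓp_two_iff_summable_sq.1 (memℓp_centralDiff hp)
  have hL := memℓp_two_iff_summable_sq.1 (memℓp_secondDiff hp)
  have hL0 : secondDiff p 0 ≠ 0 := by
    simp only [secondDiff, p, zero_add, zero_sub, Int.natAbs_neg, Int.natAbs_one, Int.natAbs_zero,
      pow_one, pow_zero]
    linarith
  refine ⟨p, hp, hL.tsum_pos (fun _ => sq_nonneg _) 0 (by positivity), ?_⟩
  rw [← tsum_mul_left]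
  refine hD.tsum_le_tsum (fun j => ?_) (hL.mul_left ε)
  calc centralDiff p j ^ 2
      ≤ (1 - s) ^ 2 * centralDiff p j ^ 2 :=
        le_mul_of_one_le_left (sq_nonneg _) (one_le_pow₀ (by linarith))
    _ ≤ (1 + s) ^ 2 * secondDiff p j ^ 2 := sq_mul_centralDiff_pow_natAbs_le s j
    _ ≤ ε * secondDiff p j ^ 2 := by gcongr

lemma forall_memℓp_mul_tsum_sq_secondDiff_le_iff {a b : ℝ} (hb : 0 ≤ b) :
    (∀ p : ℤ → ℝ, Memℓp p 2 →
        a * ∑' j, secondDiff p j ^ 2 ≤ b * ∑' j, centralDiff p j ^ 2) ↔ a ≤ 0 := by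
  refine ⟨fun H => ?_, fun ha p _ => ?_⟩
  · by_contra! ha
    obtain ⟨p, hp, hpos, hle⟩ :=
      exists_memℓp_tsum_sq_centralDiff_le (ε := a / (b + 1)) (by positivity)
    have hbound : a ≤ b * (a / (b + 1)) := by
      refine le_of_mul_le_mul_right ((H p hp).trans ?_) hpos
      simpa only [mul_assoc] using mul_le_mul_of_nonneg_left hle hb
    rw [← mul_div_assoc, le_div_iff₀ (by positivity)] at hbound
    linarith
  · exact (mul_nonpos_of_nonpos_of_nonneg ha (tsum_nonneg fun _ => sq_nonneg _)).trans
      (mul_nonneg hb (tsum_nonneg fun _ => sq_nonneg _))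

end HighFrequency

section Moments

variable {μ : Measure ℝ}

lemma integrable_pow_of_memLp_id [IsFiniteMeasure μ] {m n : ℕ} (hμ : MemLp id n μ) (hmn : m ≤ n) :
    Integrable (fun z => z ^ m) μ := by
  have hm : MemLp id m μ := hμ.mono_exponent (mod_cast hmn)
  exact hm.integrable_norm_pow'.mono (by fun_prop) (by simp)

lemma sq_integral_sq_le_integral_pow_four [IsProbabilityMeasure μ] (hμ : MemLp id 4 μ) :
    (∫ z, z ^ 2 ∂μ) ^ 2 ≤ ∫ z, z ^ 4 ∂μ := by
  have hsq : MemLp (fun z : ℝ => z ^ 2) 2 μ := by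
    rw [memLp_two_iff_integrable_sq (by fun_prop)]
    simpa only [← pow_mul] using integrable_pow_of_memLp_id (m := 4) (n := 4) hμ le_rfl
  have hvar := variance_nonneg (fun z : ℝ => z ^ 2) μ
  rw [variance_eq_sub hsq, sub_nonneg] at hvar
  simpa only [Pi.pow_apply, ← pow_mul] using hvar

lemma integral_const_add_sq_add_pow_four [IsProbabilityMeasure μ] (hμ : MemLp id 4 μ)
    (a b c : ℝ) :
    ∫ z, (a + b * z ^ 2 + c * z ^ 4) ∂μ = a + b * ∫ z, z ^ 2 ∂μ + c * ∫ z, z ^ 4 ∂μ := by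
  have hsq := (integrable_pow_of_memLp_id (m := 2) (n := 4) hμ (by norm_num)).const_mul b
  have hfour := (integrable_pow_of_memLp_id (m := 4) (n := 4) hμ le_rfl).const_mul c
  have hconst_sq : Integrable (fun z => a + b * z ^ 2) μ := (integrable_const a).add hsq
  rw [integral_add hconst_sq hfour, integral_add (integrable_const a) hsq, integral_const_mul,
    integral_const_mul, integral_const, probReal_univ, one_smul]

lemma iteratedDeriv_succ_id_mul_zero {𝕜 : Type*} [NontriviallyNormedField 𝕜] {f : 𝕜 → 𝕜} {n : ℕ}
    (hf : ContDiffAt 𝕜 (n + 1) f 0) :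
    iteratedDeriv (n + 1) (fun t => t * f t) 0 = (n + 1) * iteratedDeriv n f 0 := by
  rw [iteratedDeriv_fun_mul (by fun_prop) (mod_cast hf)]
  simp [iteratedDeriv_fun_id_zero]

lemma integral_pow_add_two_gaussianReal (v : NNReal) (n : ℕ) :
    ∫ z, z ^ (n + 2) ∂gaussianReal 0 v = v * (n + 1) * ∫ z, z ^ n ∂gaussianReal 0 v := by
  have hint : (0 : ℝ) ∈ interior (integrableExpSet id (gaussianReal 0 v)) := by simp
  have hmoment (m : ℕ) : ∫ z, z ^ m ∂gaussianReal 0 v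
      = iteratedDeriv m (mgf id (gaussianReal 0 v)) 0 := (iteratedDeriv_mgf_zero hint m).symm
  have hderiv : deriv (mgf id (gaussianReal 0 v))
      = fun t => v * (t * mgf id (gaussianReal 0 v) t) := by
    funext t
    have hexponent : HasDerivAt (fun t : ℝ => 0 * t + v * t ^ 2 / 2) (v * t) t := by
      convert! ((hasDerivAt_pow 2 t).const_mul (v : ℝ)).div_const 2 using 1
      · funext t
        ring
      · norm_num
        ring
    rw [mgf_id_gaussianReal, hexponent.exp.deriv]
    ring
  rw [hmoment, hmoment, iteratedDeriv_succ', hderiv, iteratedDeriv_const_mul_field,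
    iteratedDeriv_succ_id_mul_zero (analyticAt_mgf hint).contDiffAt, mul_assoc]

end Moments

section MilsteinScheme

/-- One step `T_z p` of the Milstein-in-time, central-in-space scheme with correlation `ρ`, grid
spacing `h` and timestep `k`, driven by the Brownian increment `√k z`. -/
noncomputable def milsteinStep (ρ h k z : ℝ) (p : ℤ → ℝ) (j : ℤ) : ℝ :=
  p j - Real.sqrt (ρ * k) * z / (2 * h) * centralDiff p j
    + ((1 - ρ) * k + ρ * k * z ^ 2) / (2 * h ^ 2) * secondDiff p j

lemma tsum_sq_milsteinStep {ρ k : ℝ} (hρk : 0 ≤ ρ * k) (h z : ℝ) {p : ℤ → ℝ} (hp : Memℓp p 2) :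
    ∑' j, milsteinStep ρ h k z p j ^ 2 = ∑' j, p j ^ 2
      + (ρ * (k / h ^ 2) / 4 * z ^ 2 - k / h ^ 2 / 4 * (1 - ρ + ρ * z ^ 2))
        * ∑' j, centralDiff p j ^ 2
      + ((k / h ^ 2 / 2 * (1 - ρ + ρ * z ^ 2)) ^ 2 - k / h ^ 2 / 4 * (1 - ρ + ρ * z ^ 2))
        * ∑' j, secondDiff p j ^ 2 := by
  have hnoise : (Real.sqrt (ρ * k) * z / (2 * h)) ^ 2 = ρ * (k / h ^ 2) / 4 * z ^ 2 := by
    rw [div_pow, mul_pow, Real.sq_sqrt hρk]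
    ring
  refine (hasSum_sq_sub_centralDiff_add_secondDiff hp _ _).tsum_eq.trans ?_
  rw [hnoise]
  ring

lemma integral_tsum_sq_milsteinStep {μ : Measure ℝ} [IsProbabilityMeasure μ] (hμ : MemLp id 4 μ)
    (hvar : ∫ z, z ^ 2 ∂μ = 1) {ρ k : ℝ} (hρk : 0 ≤ ρ * k) (h : ℝ) {p : ℤ → ℝ}
    (hp : Memℓp p 2) :
    ∫ z, ∑' j, milsteinStep ρ h k z p j ^ 2 ∂μ = ∑' j, p j ^ 2
      + k / h ^ 2 / 4 * ((k / h ^ 2 * (1 + (∫ z, z ^ 4 ∂μ - 1) * ρ ^ 2) - 1)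
          * ∑' j, secondDiff p j ^ 2
        - (1 - ρ) * ∑' j, centralDiff p j ^ 2) := by
  simp_rw [tsum_sq_milsteinStep hρk h _ hp]
  set r := k / h ^ 2
  set P := ∑' j, p j ^ 2
  set D := ∑' j, centralDiff p j ^ 2
  set L := ∑' j, secondDiff p j ^ 2
  calc
    _ = ∫ z, (P - r / 4 * (1 - ρ) * D + ((r / 2 * (1 - ρ)) ^ 2 - r / 4 * (1 - ρ)) * L
          + (r ^ 2 / 2 * (1 - ρ) * ρ - r / 4 * ρ) * L * z ^ 2
          + (r / 2 * ρ) ^ 2 * L * z ^ 4) ∂μ := by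
      congr with z
      ring
    _ = _ := by
      rw [integral_const_add_sq_add_pow_four hμ, hvar]
      ring

theorem spde_milstein_mean_square_stability_general {μ : Measure ℝ} [IsProbabilityMeasure μ]
    (hμ : MemLp id 4 μ) (hvar : ∫ z, z ^ 2 ∂μ = 1) {ρ h k : ℝ}
    (hρ0 : 0 ≤ ρ) (hρ1 : ρ ≤ 1) (hh : 0 < h) (hk : 0 < k) :
    (∀ p : ℤ → ℝ, Memℓp p 2 →
        ∫ z, ∑' j, milsteinStep ρ h k z p j ^ 2 ∂μ ≤ ∑' j, p j ^ 2)
      ↔ k / h ^ 2 ≤ (1 + (∫ z, z ^ 4 ∂μ - 1) * ρ ^ 2)⁻¹ := by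
  have hr : 0 < k / h ^ 2 / 4 := by positivity
  have hκ : 1 ≤ ∫ z, z ^ 4 ∂μ := by
    simpa only [hvar, one_pow] using sq_integral_sq_le_integral_pow_four hμ
  have hden : 0 < 1 + (∫ z, z ^ 4 ∂μ - 1) * ρ ^ 2 := by
    have hexcess := mul_nonneg (sub_nonneg.2 hκ) (sq_nonneg ρ)
    linarith
  have hstep (p : ℤ → ℝ) (hp : Memℓp p 2) :
      ∫ z, ∑' j, milsteinStep ρ h k z p j ^ 2 ∂μ ≤ ∑' j, p j ^ 2 ↔
        (k / h ^ 2 * (1 + (∫ z, z ^ 4 ∂μ - 1) * ρ ^ 2) - 1) * ∑' j, secondDiff p j ^ 2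
          ≤ (1 - ρ) * ∑' j, centralDiff p j ^ 2 := by
    rw [integral_tsum_sq_milsteinStep hμ hvar (by positivity) h hp, add_le_iff_nonpos_right,
      ← mul_zero (k / h ^ 2 / 4), mul_le_mul_iff_right₀ hr, sub_nonpos]
  rw [forall₂_congr hstep, forall_memℓp_mul_tsum_sq_secondDiff_le_iff (sub_nonneg.2 hρ1),
    sub_nonpos, ← one_div, le_div_iff₀ hden]

end MilsteinScheme

/-- mean-square stability of the Milstein-in-time, central-in-space
discretisation of the Giles–Reisinger SPDE (with μ = 0), on the unbounded grid `j ∈ ℤ`.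
With `Z` standard normal, the random update
`(T_Z p)_j = p_j − (√(ρk)·Z/(2h))(p_{j+1} − p_{j−1})
            + (((1−ρ)k + ρk Z²)/(2h²))(p_{j+1} − 2p_j + p_{j−1})`
satisfies `E[‖T_Z p‖²_{ℓ²}] ≤ ‖p‖²_{ℓ²}` for every `p ∈ ℓ²(ℤ)` iff `k/h² ≤ (1 + 2ρ²)⁻¹`. -/
theorem spde_milstein_mean_square_stability (ρ h k : ℝ)
    (hρ0 : 0 ≤ ρ) (hρ1 : ρ ≤ 1) (hh : 0 < h) (hk : 0 < k) :
    (∀ p : ℤ → ℝ, Memℓp p 2 →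
        (∫ z, (∑' j : ℤ,
            (p j - Real.sqrt (ρ * k) * z / (2 * h) * (p (j + 1) - p (j - 1))
              + ((1 - ρ) * k + ρ * k * z ^ 2) / (2 * h ^ 2)
                  * (p (j + 1) - 2 * p j + p (j - 1))) ^ 2)
          ∂(gaussianReal 0 1))
          ≤ ∑' j : ℤ, p j ^ 2)
      ↔ k / h ^ 2 ≤ (1 + 2 * ρ ^ 2)⁻¹ := by
  have hmom := integral_pow_add_two_gaussianReal 1
  have hvar : ∫ z, z ^ 2 ∂gaussianReal 0 1 = 1 := by simpa using hmom 0
  have hκ : ∫ z, z ^ 4 ∂gaussianReal 0 1 = 3 := by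
    rw [hmom 2, hvar]
    norm_num
  have key := spde_milstein_mean_square_stability_general
    (memLp_id_gaussianReal (μ := 0) (v := 1) 4) hvar hρ0 hρ1 hh hk
  rw [hκ, show (3 : ℝ) - 1 = 2 by norm_num] at key
  exact key
end
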